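/- arXiv:1203.0408 — 3 statements merged into one kernel-verified Lean document; each statement's English description precedes it below -/
import Mathlib

section
/- Let n be even, and the fractional energy minimisation on G = ℤ/n with u(g,h) = 1/δ(g,h) (Lee distance): the minimum of (x|Ax) over x ∈ ℝ^G with (x|x) = (x|𝟙) = n/2 is attained exactly at the characteristic vectors of the two sets S_even = {g even} and S_odd = {g odd}. Consequently S_even and S_odd are the unique minimisers of total energy E_tot among subsets of cardinality n/2. -/
lemma ck_closed (θ : ℝ) (m : ℕ) :
    Real.cos (θ/2) * ∑ j ∈ Finset.range m, ((-1:ℝ)^(j+1) * Real.sin (j*θ) + (-1:ℝ)^(j+1+1) * Real.sin ((j+1:ℕ)*θ))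
      = Real.sin (θ/2) * (1 - (-1)^m * Real.cos (m*θ)) := by
  induction m with
  | zero => simp
  | succ m ih =>
    rw [Finset.sum_range_succ, mul_add, ih]
    push_cast
    have h1 : ((m:ℝ)+1)*θ = (m*θ + θ/2) + θ/2 := by ring
    have h2 : (m:ℝ)*θ = (m*θ + θ/2) - θ/2 := by ring
    rw [h1]
    generalize hb : (m:ℝ)*θ + θ/2 = b at h2 ⊢
    rw [h2, Real.sin_add, Real.sin_sub, Real.cos_add, Real.cos_sub]
    ring

noncomputable def ckφ (j : ℕ) (θ : ℝ) : ℝ := (-1:ℝ)^(j+1) * (j:ℝ)⁻¹ * (1 - Real.cos (j*θ))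

noncomputable def ckF (m : ℕ) (θ : ℝ) : ℝ := ∑ j ∈ Finset.range m, (ckφ j θ + ckφ (j+1) θ)

lemma ckφ_deriv (j : ℕ) (θ : ℝ) : HasDerivAt (ckφ j) ((-1:ℝ)^(j+1) * Real.sin (j*θ)) θ := by
  unfold ckφ
  have h := (((((hasDerivAt_id θ).const_mul (j:ℝ)).cos).const_sub 1).const_mul ((-1:ℝ)^(j+1) * (j:ℝ)⁻¹))
  refine h.congr_deriv ?_
  rcases Nat.eq_zero_or_pos j with rfl | hj
  · simp
  · have : (j:ℝ) ≠ 0 := by positivity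
    simp only [id]
    field_simp

lemma ckF_deriv (m : ℕ) (θ : ℝ) : HasDerivAt (ckF m)
    (∑ j ∈ Finset.range m, ((-1:ℝ)^(j+1) * Real.sin (j*θ) + (-1:ℝ)^(j+1+1) * Real.sin ((j+1:ℕ)*θ))) θ := by
  unfold ckF
  exact HasDerivAt.fun_sum fun j _ => (ckφ_deriv j θ).add (ckφ_deriv (j+1) θ)

lemma ck_abs (m : ℕ) (t : ℝ) : (-1:ℝ)^m * Real.cos t ≤ |Real.cos t| := by
  rcases neg_one_pow_eq_or ℝ m with h | h <;> rw [h]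
  · simpa using le_abs_self _
  · simpa using neg_le_abs _

lemma ckF_pos (m : ℕ) (hm : 0 < m) (θ : ℝ) (h0 : 0 < θ) (hπ : θ ≤ Real.pi) : 0 < ckF m θ := by
  have hcont : Continuous (ckF m) :=
    continuous_iff_continuousAt.2 fun t => (ckF_deriv m t).continuousAt
  have hm' : (0:ℝ) < m := by exact_mod_cast hm
  have hF0 : ckF m 0 = 0 := by simp [ckF, ckφ]
  have hnn : ∀ t, 0 < t → t < Real.pi → 0 ≤ deriv (ckF m) t := by
    intro t ht ht'
    rw [(ckF_deriv m t).deriv]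
    have hc : 0 < Real.cos (t/2) := Real.cos_pos_of_mem_Ioo ⟨by linarith [Real.pi_pos], by linarith⟩
    have hs : 0 < Real.sin (t/2) := Real.sin_pos_of_pos_of_lt_pi (by linarith) (by linarith)
    have h := ck_closed t m
    refine nonneg_of_mul_nonneg_right ?_ hc
    rw [h]
    have := (ck_abs m (m*t)).trans (Real.abs_cos_le_one _)
    exact mul_nonneg hs.le (by linarith)
  set δ := min θ (Real.pi/(2*m)) with hδ
  have hδ0 : 0 < δ := lt_min h0 (by have := Real.pi_pos; positivity)
  have hδ1 : δ ≤ θ := min_le_left _ _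
  have hδ2 : δ ≤ Real.pi/(2*m) := min_le_right _ _
  have hpos : ∀ t, 0 < t → t < δ → 0 < deriv (ckF m) t := by
    intro t ht ht'
    rw [(ckF_deriv m t).deriv]
    have hc : 0 < Real.cos (t/2) := Real.cos_pos_of_mem_Ioo ⟨by linarith [Real.pi_pos], by linarith⟩
    have hs : 0 < Real.sin (t/2) := Real.sin_pos_of_pos_of_lt_pi (by linarith) (by linarith)
    have h := ck_closed t m
    refine pos_of_mul_pos_right ?_ hc.le
    rw [h]
    have hmt : m*t < Real.pi/2 := by
      have : t < Real.pi/(2*m) := by linarith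
      rw [lt_div_iff₀ (by positivity)] at this
      linarith
    have hmt0 : 0 < m*t := by positivity
    have h1 : 0 < Real.cos (m*t) := Real.cos_pos_of_mem_Ioo ⟨by linarith, by linarith⟩
    have h2 : Real.cos (m*t) < 1 := by
      rw [← Real.cos_zero]
      exact Real.cos_lt_cos_of_nonneg_of_le_pi_div_two le_rfl hmt.le hmt0
    have := (ck_abs m (m*t))
    rw [abs_of_pos h1] at this
    exact mul_pos hs (by linarith)
  have hs : StrictMonoOn (ckF m) (Set.Icc 0 δ) := by
    apply strictMonoOn_of_deriv_pos (convex_Icc _ _) hcont.continuousOn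
    intro t ht
    rw [interior_Icc] at ht
    exact hpos t ht.1 ht.2
  have hmo : MonotoneOn (ckF m) (Set.Icc 0 Real.pi) := by
    apply monotoneOn_of_deriv_nonneg (convex_Icc _ _) hcont.continuousOn
    · exact fun t _ => (ckF_deriv m t).differentiableAt.differentiableWithinAt
    intro t ht
    rw [interior_Icc] at ht
    exact hnn t ht.1 ht.2
  calc 0 = ckF m 0 := hF0.symm
    _ < ckF m δ := hs ⟨le_rfl, hδ0.le⟩ ⟨hδ0.le, le_rfl⟩ hδ0
    _ ≤ ckF m θ := hmo ⟨hδ0.le, by linarith⟩ ⟨h0.le, hπ⟩ hδ1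

lemma ckF_pos2 (m : ℕ) (hm : 0 < m) (θ : ℝ) (h0 : 0 < θ) (hπ : θ < 2*Real.pi) : 0 < ckF m θ := by
  rcases le_total θ Real.pi with h | h
  · exact ckF_pos m hm θ h0 h
  · have := ckF_pos m hm (2*Real.pi - θ) (by linarith) (by linarith)
    have e : ∀ j : ℕ, ckφ j (2*Real.pi-θ) = ckφ j θ := by
      intro j
      unfold ckφ
      rw [mul_sub (j:ℝ), Real.cos_nat_mul_two_pi_sub]
    simpa [ckF, e] using this

def ckl {n : ℕ} (g : ZMod n) : ℕ := min g.val (n - g.val)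

lemma ck_sum_lee (n m : ℕ) [NeZero n] (hn : n = m + m) (φ : ℕ → ℝ) :
    ∑ g : ZMod n, φ (ckl g) = ∑ j ∈ Finset.range m, (φ j + φ (j+1)) := by
  have h1 : ∑ g : ZMod n, φ (ckl g) = ∑ j ∈ Finset.range n, φ (min j (n-j)) := by
    refine Finset.sum_bij (fun g _ => g.val) ?_ ?_ ?_ ?_
    · intro g _; simpa using ZMod.val_lt g
    · intro a _ b _ h; exact ZMod.val_injective n h
    · intro j hj
      exact ⟨(j : ZMod n), Finset.mem_univ _, ZMod.val_natCast_of_lt (by simpa using hj)⟩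
    · intro g _; rfl
  rw [h1, hn, Finset.sum_range_add, Finset.sum_add_distrib]
  congr 1
  · refine Finset.sum_congr rfl fun j hj => ?_
    rw [Finset.mem_range] at hj
    congr 1; omega
  · rw [← Finset.sum_range_reflect]
    refine Finset.sum_congr rfl fun j hj => ?_
    rw [Finset.mem_range] at hj
    congr 1; omega

noncomputable def ckC {n : ℕ} [NeZero n] (a : ZMod n) : ℝ := (ZMod.stdAddChar a : ℂ).re
noncomputable def ckS {n : ℕ} [NeZero n] (a : ZMod n) : ℝ := (ZMod.stdAddChar a : ℂ).im

lemma ckC_int {n : ℕ} [NeZero n] (j : ℤ) : ckC (j : ZMod n) = Real.cos (2*Real.pi*j/n) := by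
  unfold ckC
  rw [ZMod.stdAddChar_coe]
  have : (2 * Real.pi * Complex.I * j / n : ℂ) = ((2*Real.pi*j/n : ℝ):ℂ) * Complex.I := by
    push_cast; ring
  rw [this, Complex.exp_ofReal_mul_I_re]

lemma ckC_add {n : ℕ} [NeZero n] (a b : ZMod n) : ckC (a+b) = ckC a * ckC b - ckS a * ckS b := by
  simp [ckC, ckS, AddChar.map_add_eq_mul]
lemma ckS_neg {n : ℕ} [NeZero n] (a : ZMod n) : ckS (-a) = - ckS a := by
  simp [ckS, AddChar.map_neg_eq_conj]
lemma ckC_neg {n : ℕ} [NeZero n] (a : ZMod n) : ckC (-a) = ckC a := by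
  simp [ckC, AddChar.map_neg_eq_conj]
lemma ckC_sub {n : ℕ} [NeZero n] (a b : ZMod n) : ckC (a-b) = ckC a * ckC b + ckS a * ckS b := by
  rw [sub_eq_add_neg, ckC_add, ckC_neg, ckS_neg]; ring
lemma ckC_sum {n : ℕ} [NeZero n] (a : ZMod n) : ∑ k : ZMod n, ckC (k*a) = if a = 0 then (n:ℝ) else 0 := by
  have := AddChar.sum_mulShift a (ZMod.isPrimitive_stdAddChar n)
  have h := congrArg Complex.re this
  rw [Complex.re_sum] at h
  simp only [ckC]
  rw [h]
  split_ifs <;> simp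

lemma ckC_lee {n : ℕ} [NeZero n] (k g : ZMod n) :
    ckC (k*g) = Real.cos ((ckl g : ℕ) * (2*Real.pi*k.val/n)) := by
  have hn : (n:ℝ) ≠ 0 := by exact_mod_cast NeZero.ne n
  have h1 : ckC (k*g) = Real.cos (g.val * (2*Real.pi*k.val/n)) := by
    have : k*g = (((k.val*g.val : ℕ):ℤ) : ZMod n) := by push_cast; simp
    rw [this, ckC_int]
    congr 1; push_cast; ring
  rw [h1]
  unfold ckl
  rcases min_choice g.val (n - g.val) with h | h <;> rw [h]
  rw [Nat.cast_sub (ZMod.val_lt g).le]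
  have : ((n:ℝ) - g.val) * (2*Real.pi*k.val/n) = k.val * (2*Real.pi) - g.val * (2*Real.pi*k.val/n) := by
    field_simp
  rw [this, Real.cos_nat_mul_two_pi_sub]

noncomputable def ckP {n : ℕ} [NeZero n] (z : ZMod n → ℝ) (k : ZMod n) : ℝ :=
  (∑ h, z h * ckC (k*h))^2 + (∑ h, z h * ckS (k*h))^2

lemma ckP_eq {n : ℕ} [NeZero n] (z : ZMod n → ℝ) (k : ZMod n) :
    ckP z k = ∑ h, ∑ h', z h * z h' * ckC (k*(h-h')) := by
  unfold ckP
  rw [sq, sq, Finset.sum_mul_sum, Finset.sum_mul_sum, ← Finset.sum_add_distrib]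
  refine Finset.sum_congr rfl fun h _ => ?_
  rw [← Finset.sum_add_distrib]
  refine Finset.sum_congr rfl fun h' _ => ?_
  rw [mul_sub, ckC_sub]; ring

lemma ckCC {n : ℕ} [NeZero n] (a b : ZMod n) : ∑ k : ZMod n, ckC (k*a) * ckC (k*b) =
    (n:ℝ)/2 * ((if a = b then 1 else 0) + (if a = -b then 1 else 0)) := by
  have : ∀ k : ZMod n, ckC (k*a) * ckC (k*b) = (ckC (k*(a-b)) + ckC (k*(a+b)))/2 := by
    intro k
    rw [mul_sub, mul_add, ckC_sub, ckC_add]; ring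
  simp_rw [this]
  rw [← Finset.sum_div, Finset.sum_add_distrib, ckC_sum, ckC_sum]
  simp only [sub_eq_zero, add_eq_zero_iff_eq_neg]
  split_ifs <;> ring

lemma ckR {n : ℕ} [NeZero n] (z : ZMod n → ℝ) (g : ZMod n) :
    ∑ k, ckP z k * ckC (k*g) = n * ∑ h, z h * z (h-g) := by
  have h1 : ∑ k, ckP z k * ckC (k*g) = ∑ h, ∑ h', z h * z h' *
      ((n:ℝ)/2 * ((if h-h' = g then 1 else 0) + (if h-h' = -g then 1 else 0))) := by
    simp_rw [← ckCC, ckP_eq, Finset.sum_mul, Finset.mul_sum]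
    rw [Finset.sum_comm]
    refine Finset.sum_congr rfl fun h _ => ?_
    rw [Finset.sum_comm]
    refine Finset.sum_congr rfl fun h' _ => ?_
    refine Finset.sum_congr rfl fun k _ => ?_
    ring
  have h2 : ∀ g : ZMod n, ∑ h, ∑ h', z h * z h' * (if h-h' = g then (1:ℝ) else 0) = ∑ h, z h * z (h-g) := by
    intro g
    refine Finset.sum_congr rfl fun h _ => ?_
    rw [Finset.sum_eq_single (h-g)]
    · simp
    · intro b _ hb
      rw [if_neg, mul_zero]
      intro h3; apply hb; rw [← h3]; ring
    · simp
  have h3 : ∑ h, z h * z (h-(-g)) = ∑ h, z h * z (h-g) := by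
    rw [← Equiv.sum_comp (Equiv.subRight g)]
    refine Finset.sum_congr rfl fun h _ => ?_
    simp [mul_comm]
  rw [h1]
  have : ∀ h h' : ZMod n, z h * z h' *
      ((n:ℝ)/2 * ((if h-h' = g then 1 else 0) + (if h-h' = -g then 1 else 0))) =
      (n:ℝ)/2 * (z h * z h' * (if h-h' = g then 1 else 0)) + (n:ℝ)/2 * (z h * z h' * (if h-h' = -g then 1 else 0)) := by
    intros; ring
  simp_rw [this, Finset.sum_add_distrib, ← Finset.mul_sum]
  rw [h2, h2, h3]; ring

def ckD {n : ℕ} [NeZero n] (z : ZMod n → ℝ) (g : ZMod n) : ℝ := ∑ h, (z h - z (h-g))^2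

lemma ck_shift {n : ℕ} [NeZero n] (f : ZMod n → ℝ) (g : ZMod n) : ∑ h, f (h-g) = ∑ h, f h :=
  Equiv.sum_comp (Equiv.subRight g) f

lemma ckD_eq {n : ℕ} [NeZero n] (z : ZMod n → ℝ) (g : ZMod n) :
    ckD z g = 2 * ∑ h, z h * z h - 2 * ∑ h, z h * z (h-g) := by
  have : ∀ h, (z h - z (h-g))^2 = z h * z h + z (h-g) * z (h-g) - 2 * (z h * z (h-g)) := by
    intro h; ring
  simp_rw [ckD, this]
  rw [Finset.sum_sub_distrib, Finset.sum_add_distrib, ck_shift (fun h => z h * z h), ← Finset.mul_sum]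
  ring

lemma ckD_four {n : ℕ} [NeZero n] (z : ZMod n → ℝ) (g : ZMod n) :
    n * ckD z g = 2 * ∑ k, ckP z k * (1 - ckC (k*g)) := by
  have h0 := ckR z 0
  have h1 := ckR z g
  have hc : ckC (0 : ZMod n) = 1 := by simp [ckC]
  simp only [mul_zero, hc, mul_one, sub_zero] at h0
  simp_rw [mul_sub, Finset.sum_sub_distrib, mul_one]
  rw [h0, h1, ckD_eq]; ring

def ckε {n : ℕ} (g : ZMod n) : ℝ := (-1)^g.val

noncomputable def ckQ {n : ℕ} [NeZero n] (z : ZMod n → ℝ) : ℝ := - ∑ g : ZMod n, ((ckl g : ℝ))⁻¹ * ckε g * ckD z g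

lemma ckε_lee {n m : ℕ} [NeZero n] (hn : n = m + m) (g : ZMod n) : ckε g = (-1)^(ckl g) := by
  unfold ckε ckl
  have := ZMod.val_lt g
  apply neg_one_pow_congr
  rw [Nat.even_iff, Nat.even_iff]
  omega

lemma ckQ_four {n m : ℕ} [NeZero n] (hn : n = m + m) (z : ZMod n → ℝ) :
    n * ckQ z = 2 * ∑ k : ZMod n, ckP z k * ckF m (2*Real.pi*k.val/n) := by
  have h1 : ∀ k : ZMod n, ckF m (2*Real.pi*k.val/n) = ∑ g : ZMod n, -((ckl g : ℝ)⁻¹ * ckε g * (1 - ckC (k*g))) := by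
    intro k
    unfold ckF
    rw [← ck_sum_lee n m hn (fun j => ckφ j (2*Real.pi*k.val/n))]
    refine Finset.sum_congr rfl fun g _ => ?_
    rw [ckε_lee hn, ckC_lee, ckφ]; ring
  simp_rw [h1, Finset.mul_sum]
  rw [Finset.sum_comm, ckQ, ← Finset.sum_neg_distrib, Finset.mul_sum]
  refine Finset.sum_congr rfl fun g _ => ?_
  have := ckD_four z g
  calc _ = -((ckl g : ℝ))⁻¹ * ckε g * (n * ckD z g) := by ring
    _ = _ := by
      rw [this, Finset.mul_sum, Finset.mul_sum]
      refine Finset.sum_congr rfl fun k _ => ?_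
      ring

lemma ckP_nonneg {n : ℕ} [NeZero n] (z : ZMod n → ℝ) (k : ZMod n) : 0 ≤ ckP z k := by
  unfold ckP; positivity

lemma ckF_k {n m : ℕ} [NeZero n] (hn : n = m + m) (k : ZMod n) (hk : k ≠ 0) : 0 < ckF m (2*Real.pi*k.val/n) := by
  have hn0 := NeZero.pos n
  have hn1 : (0:ℝ) < n := by exact_mod_cast hn0
  have hk0 : 0 < k.val := by
    rcases Nat.eq_zero_or_pos k.val with h | h
    · exact absurd ((ZMod.val_eq_zero k).1 h) hk
    · exact h
  have hk1 : (0:ℝ) < k.val := by exact_mod_cast hk0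
  have hk2 : (k.val:ℝ) < n := by exact_mod_cast ZMod.val_lt k
  have := Real.pi_pos
  apply ckF_pos2 m (by omega)
  · positivity
  · rw [div_lt_iff₀ hn1]
    exact mul_lt_mul_of_pos_left hk2 (by positivity)

lemma ckF_zero (m : ℕ) : ckF m 0 = 0 := by simp [ckF, ckφ]

lemma ckQ_term {n m : ℕ} [NeZero n] (hn : n = m + m) (z : ZMod n → ℝ) (k : ZMod n) :
    0 ≤ ckP z k * ckF m (2*Real.pi*k.val/n) := by
  by_cases hk : k = 0
  · subst hk; simp [ckF_zero]
  · exact mul_nonneg (ckP_nonneg z k) (ckF_k hn k hk).le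

lemma ckQ_nonneg {n m : ℕ} [NeZero n] (hn : n = m + m) (z : ZMod n → ℝ) : 0 ≤ ckQ z := by
  have hn1 : (0:ℝ) < n := by exact_mod_cast NeZero.pos n
  refine nonneg_of_mul_nonneg_right ?_ hn1
  rw [ckQ_four hn]
  exact mul_nonneg (by norm_num) (Finset.sum_nonneg fun k _ => ckQ_term hn z k)

lemma ckQ_zero {n m : ℕ} [NeZero n] (hn : n = m + m) (z : ZMod n → ℝ) (hQ : ckQ z = 0) (g : ZMod n) :
    z g = z 0 := by
  have hn1 : (0:ℝ) < n := by exact_mod_cast NeZero.pos n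
  have h := ckQ_four hn z
  rw [hQ, mul_zero] at h
  have h2 : ∑ k : ZMod n, ckP z k * ckF m (2*Real.pi*k.val/n) = 0 := by linarith
  rw [Finset.sum_eq_zero_iff_of_nonneg fun k _ => ckQ_term hn z k] at h2
  have hP : ∀ k : ZMod n, k ≠ 0 → ckP z k = 0 := fun k hk =>
    (mul_eq_zero.1 (h2 k (Finset.mem_univ _))).resolve_right (ckF_k hn k hk).ne'
  have hD := ckD_four z g
  rw [Finset.sum_eq_zero, mul_zero] at hD
  · have hD := (mul_eq_zero.1 hD).resolve_left hn1.ne'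
    unfold ckD at hD
    rw [Finset.sum_eq_zero_iff_of_nonneg fun k _ => sq_nonneg _] at hD
    have := hD g (Finset.mem_univ _)
    rw [sub_self] at this
    linarith [pow_eq_zero_iff (two_ne_zero) |>.1 this]
  · intro k _
    by_cases hk : k = 0
    · subst hk; simp [ckC]
    · rw [hP k hk, zero_mul]

lemma ckε_sq {n : ℕ} (g : ZMod n) : ckε g * ckε g = 1 := by
  unfold ckε; rw [← mul_pow]; simp

lemma ckε_add {n m : ℕ} [NeZero n] (hn : n = m + m) (a b : ZMod n) : ckε (a+b) = ckε a * ckε b := by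
  unfold ckε
  rw [← pow_add, ZMod.val_add]
  apply neg_one_pow_congr
  rw [Nat.even_iff, Nat.even_iff, Nat.mod_mod_of_dvd]
  omega

lemma ckε_sub {n m : ℕ} [NeZero n] (hn : n = m + m) (a b : ZMod n) : ckε a * ckε (a-b) = ckε b := by
  have := ckε_add hn (a-b) b
  rw [sub_add_cancel] at this
  rw [this, mul_right_comm, ckε_sq, one_mul]

noncomputable def ckE {n : ℕ} [NeZero n] (x : ZMod n → ℝ) : ℝ :=
  ∑ h : ZMod n, ∑ g : ZMod n, (ckl g : ℝ)⁻¹ * (x h * x (h-g))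

noncomputable def ckz {n : ℕ} (x : ZMod n → ℝ) (g : ZMod n) : ℝ := ckε g * (x g - 1/2)

lemma ckE_eq {n m : ℕ} [NeZero n] (hn : n = m + m) (x : ZMod n → ℝ)
    (h1 : ∑ g, x g * x g = (n:ℝ)/2) (h2 : ∑ g, x g = (n:ℝ)/2) :
    ckE x = (n:ℝ)/4 * (∑ g : ZMod n, (ckl g : ℝ)⁻¹ * (1 + ckε g)) + ckQ (ckz x) / 2 := by
  have hzz : ∑ h, ckz x h * ckz x h = (n:ℝ)/4 := by
    have : ∀ h, ckz x h * ckz x h = x h * x h - x h + 1/4 := by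
      intro h
      unfold ckz
      linear_combination (x h - 1/2)^2 * ckε_sq h
    simp_rw [this]
    rw [Finset.sum_add_distrib, Finset.sum_sub_distrib, h1, h2]
    simp [ZMod.card]; ring
  have key : ∀ g : ZMod n, ∑ h, x h * x (h-g) = (n:ℝ)/4 + ckε g * ((n:ℝ)/4 - ckD (ckz x) g / 2) := by
    intro g
    have e : ∀ h, x h * x (h-g) = 1/2 * x h + 1/2 * x (h-g) - 1/4 + ckε g * (ckz x h * ckz x (h-g)) := by
      intro h
      unfold ckz
      have a := ckε_sub hn h g
      have b := ckε_sq g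
      linear_combination (-(x h - 1/2) * (x (h-g) - 1/2)) * b - ckε g * (x h - 1/2) * (x (h-g) - 1/2) * a
    have d := ckD_eq (ckz x) g
    rw [hzz] at d
    simp_rw [e]
    rw [Finset.sum_add_distrib, Finset.sum_sub_distrib, Finset.sum_add_distrib, ← Finset.mul_sum, ← Finset.mul_sum,
      ← Finset.mul_sum, ck_shift x, h2, d]
    simp [ZMod.card]; ring
  unfold ckE
  rw [Finset.sum_comm]
  simp_rw [← Finset.mul_sum, key, ckQ]
  rw [neg_div, Finset.sum_div, Finset.mul_sum, ← sub_eq_add_neg, ← Finset.sum_sub_distrib]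
  refine Finset.sum_congr rfl fun g _ => ?_
  ring

lemma ck_e {n : ℕ} (g : ZMod n) : (if g.val % 2 = 0 then (1:ℝ) else 0) = 1/2 + 1/2 * ckε g := by
  unfold ckε
  rcases Nat.mod_two_eq_zero_or_one g.val with h | h
  · rw [if_pos h, (Nat.even_iff.2 h).neg_one_pow]; norm_num
  · rw [if_neg (by omega), (Nat.odd_iff.2 h).neg_one_pow]; norm_num

lemma ck_o {n : ℕ} (g : ZMod n) : (if g.val % 2 = 1 then (1:ℝ) else 0) = 1/2 + (-1/2) * ckε g := by
  unfold ckε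
  rcases Nat.mod_two_eq_zero_or_one g.val with h | h
  · rw [if_neg (by omega), (Nat.even_iff.2 h).neg_one_pow]; norm_num
  · rw [if_pos h, (Nat.odd_iff.2 h).neg_one_pow]; norm_num

lemma ckε_sum {n m : ℕ} [NeZero n] (hn : n = m + m) : ∑ g : ZMod n, ckε g = 0 := by
  simp_rw [ckε_lee hn]
  rw [ck_sum_lee n m hn (fun j => (-1:ℝ)^j)]
  refine Finset.sum_eq_zero fun j _ => ?_
  ring

lemma ck_constr {n m : ℕ} [NeZero n] (hn : n = m + m) (c : ℝ) (hc : c^2 = 1/4) :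
    (∑ g : ZMod n, (1/2 + c * ckε g) * (1/2 + c * ckε g) = (n:ℝ)/2) ∧ ∑ g : ZMod n, (1/2 + c * ckε g) = (n:ℝ)/2 := by
  have : ∀ g : ZMod n, (1/2 + c * ckε g) * (1/2 + c * ckε g) = 1/2 + c * ckε g := by
    intro g
    linear_combination (ckε g * ckε g) * hc + 1/4 * ckε_sq g
  simp_rw [this]
  rw [and_self, Finset.sum_add_distrib, ← Finset.mul_sum, ckε_sum hn]
  simp [ZMod.card]; ring

lemma ckQ_const {n : ℕ} [NeZero n] (c : ℝ) : ckQ (ckz (fun g : ZMod n => 1/2 + c * ckε g)) = 0 := by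
  have : ∀ g : ZMod n, ckz (fun g : ZMod n => 1/2 + c * ckε g) g = c := by
    intro g; unfold ckz; linear_combination c * ckε_sq g
  simp only [ckQ, ckD, this]
  simp

lemma ck_main {n m : ℕ} [NeZero n] (hn : n = m + m) (x : ZMod n → ℝ)
    (h1 : ∑ g, x g * x g = (n:ℝ)/2) (h2 : ∑ g, x g = (n:ℝ)/2) :
    ckE (fun g : ZMod n => 1/2 + 1/2 * ckε g) ≤ ckE x ∧
    (ckE x = ckE (fun g : ZMod n => 1/2 + 1/2 * ckε g) ↔
      x = (fun g : ZMod n => 1/2 + 1/2 * ckε g) ∨ x = (fun g : ZMod n => 1/2 + (-1/2) * ckε g)) := by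
  have hE : ∀ c : ℝ, c^2 = 1/4 → ckE (fun g : ZMod n => 1/2 + c * ckε g) =
      (n:ℝ)/4 * (∑ g : ZMod n, (ckl g : ℝ)⁻¹ * (1 + ckε g)) := by
    intro c hc
    rw [ckE_eq hn _ (ck_constr hn c hc).1 (ck_constr hn c hc).2, ckQ_const]; ring
  have hx := ckE_eq hn x h1 h2
  have he := hE (1/2) (by norm_num)
  have ho := hE (-1/2) (by norm_num)
  refine ⟨?_, ?_, ?_⟩
  · linarith [ckQ_nonneg hn (ckz x)]
  · intro h
    have hQ : ckQ (ckz x) = 0 := by linarith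
    have hz := ckQ_zero hn _ hQ
    have hxx : x = fun g : ZMod n => 1/2 + ckz x 0 * ckε g := by
      funext g
      rw [← hz g]; unfold ckz
      linear_combination (-(x g - 1/2)) * ckε_sq g
    generalize ckz x 0 = c at hxx
    have hn1 : (n:ℝ) ≠ 0 := by exact_mod_cast NeZero.ne n
    have hc : (c - 1/2) * (c + 1/2) = 0 := by
      have e : ∀ g : ZMod n, x g * x g = x g + (c^2 - 1/4) := by
        intro g
        rw [hxx]
        linear_combination c^2 * ckε_sq g
      simp_rw [e] at h1
      rw [Finset.sum_add_distrib, h2] at h1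
      rw [Finset.sum_const, Finset.card_univ, ZMod.card, nsmul_eq_mul] at h1
      have h3 : (n:ℝ) * (c^2 - 1/4) = 0 := by linarith
      have h4 := (mul_eq_zero.1 h3).resolve_left hn1
      linear_combination h4
    rcases mul_eq_zero.1 hc with h | h
    · left; rw [hxx, show c = 1/2 by linarith]
    · right; rw [hxx, show c = -1/2 by linarith]
  · rintro (h | h)
    · rw [h]
    · rw [h, he, ho]

theorem cycle_checkerboard_minimises (n : ℕ) [NeZero n] (heven : Even n) :
    let lee : ZMod n → ℕ := fun g => min g.val (n - g.val)
    let A : (ZMod n → ℝ) → (ZMod n → ℝ) := fun x h =>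
      ∑ g ∈ Finset.univ.erase (0 : ZMod n), ((lee g : ℝ))⁻¹ * x (h - g)
    let E : (ZMod n → ℝ) → ℝ := fun x => ∑ h : ZMod n, x h * A x h
    let xe : ZMod n → ℝ := fun g => if g.val % 2 = 0 then 1 else 0
    let xo : ZMod n → ℝ := fun g => if g.val % 2 = 1 then 1 else 0
    let constr : (ZMod n → ℝ) → Prop := fun x =>
      (∑ g : ZMod n, x g * x g) = (n : ℝ) / 2 ∧ (∑ g : ZMod n, x g) = (n : ℝ) / 2
    let Se : Finset (ZMod n) := Finset.univ.filter (fun g => g.val % 2 = 0)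
    let So : Finset (ZMod n) := Finset.univ.filter (fun g => g.val % 2 = 1)
    let Etot : Finset (ZMod n) → ℝ := fun S => ∑ h ∈ S, ∑ g ∈ S.erase h, ((lee (h - g) : ℝ))⁻¹
    (constr xe ∧ constr xo ∧
      (∀ x : ZMod n → ℝ, constr x → E xe ≤ E x) ∧
      (∀ x : ZMod n → ℝ, constr x → (E x = E xe ↔ x = xe ∨ x = xo))) ∧
    (∀ S : Finset (ZMod n), S.card = n / 2 →
      Etot Se ≤ Etot S ∧ (Etot S = Etot Se ↔ S = Se ∨ S = So)) := by
  intro lee A E xe xo constr Se So Etot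
  obtain ⟨m, hn⟩ := heven
  have hxe : xe = fun g : ZMod n => 1/2 + 1/2 * ckε g := funext ck_e
  have hxo : xo = fun g : ZMod n => 1/2 + (-1/2) * ckε g := funext ck_o
  have hl0 : ((ckl (0 : ZMod n) : ℕ) : ℝ)⁻¹ = 0 := by simp [ckl]
  have hE : ∀ x, E x = ckE x := by
    intro x
    refine Finset.sum_congr rfl fun h _ => ?_
    have : A x h = ∑ g : ZMod n, (ckl g : ℝ)⁻¹ * x (h-g) := by
      refine Finset.sum_erase _ ?_
      change ((ckl (0 : ZMod n) : ℕ) : ℝ)⁻¹ * _ = 0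
      rw [hl0, zero_mul]
    rw [this, Finset.mul_sum]
    refine Finset.sum_congr rfl fun g _ => ?_
    ring
  have hmain : ∀ x, constr x → E xe ≤ E x ∧ (E x = E xe ↔ x = xe ∨ x = xo) := by
    intro x hx
    rw [hE, hE, hxe, hxo]
    exact ck_main hn x hx.1 hx.2
  refine ⟨⟨?_, ?_, fun x hx => (hmain x hx).1, fun x hx => (hmain x hx).2⟩, ?_⟩
  · rw [hxe]; exact ck_constr hn _ (by norm_num)
  · rw [hxo]; exact ck_constr hn _ (by norm_num)
  let ind : Finset (ZMod n) → ZMod n → ℝ := fun S g => if g ∈ S then 1 else 0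
  have hinj : Function.Injective ind := by
    intro S T h
    ext g
    have := congrFun h g
    by_cases h1 : g ∈ S <;> by_cases h2 : g ∈ T <;> simp [ind, h1, h2] at this ⊢
  have hSe : ind Se = xe := by funext g; simp [ind, Se, xe]
  have hSo : ind So = xo := by funext g; simp [ind, So, xo]
  have hEt : ∀ S, Etot S = E (ind S) := by
    intro S
    rw [hE]
    have e1 : ∀ h, ∑ g ∈ S.erase h, ((lee (h - g) : ℝ))⁻¹ = ∑ g ∈ S, ((ckl (h - g) : ℝ))⁻¹ := by
      intro h
      refine Finset.sum_erase _ ?_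
      rw [sub_self]; exact hl0
    have e2 : ∀ h, ∑ g : ZMod n, (ckl g : ℝ)⁻¹ * (ind S h * ind S (h-g)) =
        ind S h * ∑ g ∈ S, ((ckl (h - g) : ℝ))⁻¹ := by
      intro h
      rw [← Equiv.sum_comp (Equiv.subLeft h), Finset.mul_sum]
      simp only [Equiv.subLeft_apply, sub_sub_cancel]
      rw [← Finset.sum_subset (Finset.subset_univ S)]
      · refine Finset.sum_congr rfl fun g hg => ?_
        simp [ind, hg, mul_comm]
      · intro g _ hg
        simp [ind, hg]
    simp only [Etot, e1, ckE, e2]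
    simp [ind]
  intro S hS
  have hc : constr (ind S) := by
    have : (S.card : ℝ) = (n:ℝ)/2 := by
      rw [hS, show n / 2 = m by omega, hn]; push_cast; ring
    constructor <;> simp [ind, this]
  have := hmain _ hc
  rw [← hSe, ← hSo, ← hEt, ← hEt, hinj.eq_iff, hinj.eq_iff] at this
  exact this
end

section
/- Let each n_i (i = 1,…,d) be either 2 or a multiple of 4, G = ∏_i ℤ/n_i with Lee distance δ, and f : ℝ₊ → ℝ₊ completely monotonic. Then the function on characters χ of G given by λ(χ) = ∑_{g ∈ G, g≠0} f(δ(g,0)) χ(g) has a unique minimum at the character χ = (−1,…,−1) (i.e., χ(g) = (−1)^{g₁+…+g_d}). -/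
/-- `f` is completely monotonic on `ℝ₊`: it is `C^∞` on `(0, ∞)` and its `k`-th
derivative has sign `(−1)^k` there. -/
def CompletelyMonotonic (f : ℝ → ℝ) : Prop :=
  ContDiffOn ℝ (⊤ : ℕ∞) f (Set.Ioi 0) ∧
    ∀ k : ℕ, ∀ x : ℝ, 0 < x → 0 < (-1 : ℝ) ^ k * iteratedDerivWithin k f (Set.Ioi 0) x

open Polynomial in
lemma bern_identity (N m : ℕ) (hm : m ≤ N) :
    ∑ i ∈ Finset.range (N + 1), ((N.choose i * i.choose m : ℕ) : ℝ[X]) * (X ^ i * (1 - X) ^ (N - i))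
      = ((N.choose m : ℕ) : ℝ[X]) * X ^ m := by
  obtain ⟨M, rfl⟩ := Nat.exists_eq_add_of_le hm
  rw [add_assoc, Finset.sum_range_add]
  rw [Finset.sum_eq_zero (fun i hi => by
    rw [Nat.choose_eq_zero_of_lt (Finset.mem_range.1 hi)]; simp), zero_add]
  have h1 : (X + (1 - X) : ℝ[X]) ^ M = 1 := by simp
  have h2 := add_pow (X : ℝ[X]) (1 - X) M
  rw [h1] at h2
  conv_rhs => rw [← mul_one (X ^ m), h2]
  rw [Finset.mul_sum, Finset.mul_sum]
  refine Finset.sum_congr rfl fun k hk => ?_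
  have hk' : k ≤ M := Nat.lt_succ_iff.1 (Finset.mem_range.1 hk)
  rw [Nat.choose_mul (by omega : m ≤ m + k)]
  have e1 : m + M - m = M := by omega
  have e2 : m + k - m = k := by omega
  have e3 : m + M - (m + k) = M - k := by omega
  rw [e1, e2, e3]
  push_cast
  ring

lemma ratio_bound (N i : ℕ) (hi : i ≤ N) (m : ℕ) (hm : m < N) :
    0 ≤ ((i.choose m : ℝ) / N.choose m) ∧ ((i.choose m : ℝ) / N.choose m) ≤ 1 ∧
    |((i.choose m : ℝ) / N.choose m) - ((i : ℝ) / N) ^ m| ≤ (m : ℝ) ^ 2 / (N - m) := by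
  induction m with
  | zero => simp
  | succ m ih =>
    obtain ⟨h0, h1, h2⟩ := ih (by omega)
    have hNm : (0 : ℝ) < (N : ℝ) - m := by
      have : ((m + 1 : ℕ) : ℝ) < N := by exact_mod_cast hm
      push_cast at this; linarith
    have hNm1 : (0 : ℝ) < (N : ℝ) - (m + 1) := by
      have : ((m + 1 : ℕ) : ℝ) < N := by exact_mod_cast hm
      push_cast at this; linarith
    have hmr : (0 : ℝ) ≤ m := by positivity
    have hN : (0 : ℝ) < N := by linarith
    have hiN : (i : ℝ) ≤ N := by exact_mod_cast hi
    set u : ℝ := ((i - m : ℕ) : ℝ) / (N - m) with hu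
    set t : ℝ := (i : ℝ) / N with ht
    set r : ℝ := ((i.choose m : ℝ) / N.choose m) with hr
    have hr1 : ((i.choose (m + 1) : ℝ) / N.choose (m + 1)) = r * u := by
      have a1 : (i.choose (m + 1) : ℝ) * (m + 1) = i.choose m * ((i - m : ℕ) : ℝ) := by
        exact_mod_cast Nat.choose_succ_right_eq i m
      have a2 : (N.choose (m + 1) : ℝ) * (m + 1) = N.choose m * ((N : ℝ) - m) := by
        have := Nat.choose_succ_right_eq N m
        have h3 : ((N - m : ℕ) : ℝ) = (N : ℝ) - m := by
          rw [Nat.cast_sub (by omega)]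
        rw [← h3]; exact_mod_cast this
      have p1 : (0 : ℝ) < N.choose (m + 1) := by
        exact_mod_cast Nat.choose_pos (by omega)
      have p2 : (0 : ℝ) < N.choose m := by
        exact_mod_cast Nat.choose_pos (by omega)
      rw [hr, hu, div_mul_div_comm, ← a1, ← a2]
      field_simp
    have hu0 : 0 ≤ u := by positivity
    have hu1 : u ≤ 1 := by
      rw [hu, div_le_one hNm, ← Nat.cast_sub (by omega)]
      exact_mod_cast (by omega)
    have ht0 : 0 ≤ t := by positivity
    have ht1 : t ≤ 1 := by rw [ht, div_le_one hN]; exact hiN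
    have hut : |u - t| ≤ m / (N - m) := by
      rcases le_total m i with h | h
      · have e : u - t = -(m * (N - i) / (N * (N - m))) := by
          rw [hu, ht, Nat.cast_sub h]
          field_simp
          ring
        rw [e, abs_neg, abs_of_nonneg (by
          apply div_nonneg <;> apply mul_nonneg <;> linarith)]
        rw [div_le_div_iff₀ (by positivity) hNm]
        have : (m : ℝ) * (N - i) ≤ m * N := by
          apply mul_le_mul_of_nonneg_left _ hmr
          have : (0 : ℝ) ≤ i := by positivity
          linarith
        nlinarith
      · have e : u = 0 := by rw [hu, Nat.sub_eq_zero_of_le h]; simp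
        rw [e, zero_sub, abs_neg, abs_of_nonneg ht0, ht]
        apply div_le_div₀ hmr (by exact_mod_cast h) hNm (by linarith)
    rw [hr1]
    refine ⟨by positivity, mul_le_one₀ h1 hu0 hu1, ?_⟩
    have e : r * u - t ^ (m + 1) = (r - t ^ m) * u + t ^ m * (u - t) := by ring
    rw [e]
    calc |(r - t ^ m) * u + t ^ m * (u - t)| ≤ |(r - t ^ m) * u| + |t ^ m * (u - t)| :=
          abs_add_le _ _
      _ = |r - t ^ m| * u + t ^ m * |u - t| := by
          rw [abs_mul, abs_mul, abs_of_nonneg hu0, abs_of_nonneg (pow_nonneg ht0 m)]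
      _ ≤ (m : ℝ) ^ 2 / (N - m) * 1 + 1 * (m / (N - m)) := by
          gcongr
          exact pow_le_one₀ ht0 ht1
      _ = ((m : ℝ) ^ 2 + m) / (N - m) := by ring
      _ ≤ ((m + 1 : ℕ) : ℝ) ^ 2 / (N - (m + 1 : ℕ)) := by
          push_cast
          apply div_le_div₀ (by positivity) (by nlinarith) hNm1 (by linarith)

open Polynomial in
lemma L_nonneg (L : ℝ[X] →ₗ[ℝ] ℝ) (hL : ∀ i j : ℕ, 0 ≤ L (X ^ i * (1 - X) ^ j))
    (q : ℝ[X]) (hq : ∀ x : ℝ, 0 ≤ x → x ≤ 1 → 0 ≤ q.eval x) : 0 ≤ L q := by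
  set K := q.natDegree with hK
  set A := ∑ m ∈ Finset.range (K + 1), |q.coeff m| with hA
  have key : ∀ N : ℕ, K < N → -(L 1 * A * ((K : ℝ) ^ 2 / (N - K))) ≤ L q := by
    intro N hN
    have hNK : (0 : ℝ) < (N : ℝ) - K := by
      have : (K : ℝ) < N := by exact_mod_cast hN
      linarith
    let w : ℕ → ℝ := fun i => N.choose i * L (X ^ i * (1 - X) ^ (N - i))
    have hw : ∀ i, 0 ≤ w i := fun i => mul_nonneg (by positivity) (hL _ _)
    have hmom : ∀ m ≤ N, L (X ^ m) =
        ∑ i ∈ Finset.range (N + 1), ((i.choose m : ℝ) / N.choose m) * w i := by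
      intro m hm
      have p2 : (0 : ℝ) < N.choose m := by exact_mod_cast Nat.choose_pos hm
      have h := congrArg L (bern_identity N m hm)
      simp only [map_sum, ← nsmul_eq_mul, map_nsmul] at h
      simp only [nsmul_eq_mul] at h
      have h' : L (X ^ m) = (∑ i ∈ Finset.range (N + 1), ((N.choose i * i.choose m : ℕ) : ℝ) * L (X ^ i * (1 - X) ^ (N - i))) / N.choose m := by
        rw [h]; field_simp
      rw [h', Finset.sum_div]
      refine Finset.sum_congr rfl fun i _ => ?_
      simp only [w]; push_cast; ring
    have hw1 : L 1 = ∑ i ∈ Finset.range (N + 1), w i := by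
      have := hmom 0 (Nat.zero_le _)
      simpa using this
    have hLq : L q = ∑ i ∈ Finset.range (N + 1),
        w i * ∑ m ∈ Finset.range (K + 1), q.coeff m * ((i.choose m : ℝ) / N.choose m) := by
      conv_lhs => rw [q.as_sum_range_C_mul_X_pow]
      simp only [← smul_eq_C_mul, map_sum, map_smul, smul_eq_mul, Finset.mul_sum]
      rw [Finset.sum_comm]
      refine Finset.sum_congr rfl fun m hm => ?_
      rw [hmom m (by have := Finset.mem_range.1 hm; omega), Finset.mul_sum]
      refine Finset.sum_congr rfl fun i _ => ?_
      ring
    rw [hLq, hw1, Finset.sum_mul, Finset.sum_mul, ← Finset.sum_neg_distrib]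
    refine Finset.sum_le_sum fun i hi => ?_
    have hi' : i ≤ N := Nat.lt_succ_iff.1 (Finset.mem_range.1 hi)
    rw [mul_assoc, ← mul_neg]
    refine mul_le_mul_of_nonneg_left ?_ (hw i)
    have hN0 : (0 : ℝ) < N := by exact_mod_cast (by omega)
    have hpos := hq ((i : ℝ) / N) (by positivity) (by
      rw [div_le_one hN0]; exact_mod_cast hi')
    rw [eval_eq_sum_range] at hpos
    have hdiff : |∑ m ∈ Finset.range (K + 1), q.coeff m * ((i.choose m : ℝ) / N.choose m)
        - ∑ m ∈ Finset.range (K + 1), q.coeff m * ((i : ℝ) / N) ^ m| ≤ A * ((K : ℝ) ^ 2 / (N - K)) := by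
      rw [← Finset.sum_sub_distrib, hA, Finset.sum_mul]
      refine (Finset.abs_sum_le_sum_abs _ _).trans (Finset.sum_le_sum fun m hm => ?_)
      rw [← mul_sub, abs_mul]
      have hmK : m ≤ K := Nat.lt_succ_iff.1 (Finset.mem_range.1 hm)
      have hmK' : (m : ℝ) ≤ K := by exact_mod_cast hmK
      refine mul_le_mul_of_nonneg_left ?_ (abs_nonneg _)
      refine (ratio_bound N i hi' m (by omega)).2.2.trans ?_
      apply div_le_div₀ (by positivity) (by gcongr) hNK (by linarith)
    have := (abs_le.1 hdiff).1
    linarith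
  have lim : Filter.Tendsto (fun N : ℕ => -(L 1 * A * ((K : ℝ) ^ 2 / ((N : ℝ) - K))))
      Filter.atTop (nhds 0) := by
    have h1 : Filter.Tendsto (fun N : ℕ => (N : ℝ) - K) Filter.atTop Filter.atTop :=
      Filter.tendsto_atTop_add_const_right _ _ tendsto_natCast_atTop_atTop
    have h2 := (h1.const_div_atTop ((K : ℝ) ^ 2)).const_mul (L 1 * A)
    simpa using h2.neg
  exact le_of_tendsto lim (Filter.eventually_atTop.2 ⟨K + 1, fun N hN => key N (by omega)⟩)

open Polynomial in
lemma L_pos (L : ℝ[X] →ₗ[ℝ] ℝ) (hL : ∀ i j : ℕ, 0 < L (X ^ i * (1 - X) ^ j))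
    (p : ℝ[X]) (hp : ∀ x : ℝ, 0 < x → x < 1 → 0 < p.eval x) : 0 < L p := by
  have hp0 : p ≠ 0 := by
    rintro rfl
    have := hp (1 / 2) (by norm_num) (by norm_num)
    simp at this
  obtain ⟨q, hq, hq0⟩ := Polynomial.exists_eq_pow_rootMultiplicity_mul_and_not_dvd p hp0 0
  have hqne : q ≠ 0 := by rintro rfl; simp at hq0
  obtain ⟨s, hs, hs0⟩ := Polynomial.exists_eq_pow_rootMultiplicity_mul_and_not_dvd q hqne 1
  set a := p.rootMultiplicity 0
  set b := q.rootMultiplicity 1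
  -- Q = (-1)^b s
  let Q : ℝ[X] := (-1) ^ b * s
  have hfac : p = X ^ a * (1 - X) ^ b * Q := by
    have e : (1 - X : ℝ[X]) = (-1) * (X - 1) := by ring
    have e2 : ((-1 : ℝ[X]) ^ b) * (-1) ^ b = 1 := by rw [← mul_pow]; simp
    rw [hq, hs, e, mul_pow]
    simp only [Q, C_0, sub_zero, C_1]
    linear_combination (-X ^ a * (X - 1) ^ b * s) * e2
  have hQ0 : Q.eval 0 ≠ 0 := by
    intro h
    apply hq0
    rw [dvd_iff_isRoot, IsRoot, hs]
    have : s.eval 0 = 0 := by simpa [Q] using h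
    simp [this]
  have hQ1 : Q.eval 1 ≠ 0 := by
    intro h
    apply hs0
    rw [dvd_iff_isRoot, IsRoot]
    simpa [Q] using h
  have hQpos : ∀ x : ℝ, 0 < x → x < 1 → 0 < Q.eval x := by
    intro x h0 h1
    have h := hp x h0 h1
    rw [hfac] at h
    simp only [eval_mul, eval_pow, eval_X, eval_sub, eval_one] at h
    have : 0 < x ^ a * (1 - x) ^ b := mul_pos (pow_pos h0 _) (pow_pos (by linarith) _)
    exact pos_of_mul_pos_right h this.le
  have hQnn : ∀ x ∈ Set.Icc (0 : ℝ) 1, 0 ≤ Q.eval x := by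
    have hcl : IsClosed {x : ℝ | 0 ≤ Q.eval x} := isClosed_le continuous_const Q.continuous
    have : closure (Set.Ioo (0 : ℝ) 1) ⊆ {x : ℝ | 0 ≤ Q.eval x} :=
      closure_minimal (fun x hx => (hQpos x hx.1 hx.2).le) hcl
    rw [closure_Ioo (by norm_num)] at this
    exact this
  have hQpos' : ∀ x ∈ Set.Icc (0 : ℝ) 1, 0 < Q.eval x := by
    intro x hx
    refine lt_of_le_of_ne (hQnn x hx) ?_
    rcases eq_or_lt_of_le hx.1 with h | h
    · subst h; exact hQ0.symm
    rcases eq_or_lt_of_le hx.2 with h' | h'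
    · subst h'; exact hQ1.symm
    exact (hQpos x h h').ne
  obtain ⟨x0, hx0, hmin⟩ := isCompact_Icc.exists_isMinOn (Set.nonempty_Icc.2 zero_le_one)
    (Q.continuous.continuousOn (s := Set.Icc (0 : ℝ) 1))
  set ε := Q.eval x0
  have hε : 0 < ε := hQpos' x0 hx0
  let L' : ℝ[X] →ₗ[ℝ] ℝ := L ∘ₗ LinearMap.mulLeft ℝ (X ^ a * (1 - X) ^ b)
  have hL' : ∀ i j : ℕ, 0 < L' (X ^ i * (1 - X) ^ j) := by
    intro i j
    have : L' (X ^ i * (1 - X) ^ j) = L (X ^ (a + i) * (1 - X) ^ (b + j)) := by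
      simp only [L', LinearMap.comp_apply, LinearMap.mulLeft_apply]
      congr 1; ring
    rw [this]; exact hL _ _
  have h1 := L_nonneg L' (fun i j => (hL' i j).le) (Q - ε • 1) (by
    intro x h0 h1
    have := hmin (show x ∈ Set.Icc (0 : ℝ) 1 from ⟨h0, h1⟩)
    simp only [eval_sub, eval_smul, eval_one, smul_eq_mul, mul_one]
    have h3 : ε ≤ Q.eval x := this
    linarith)
  rw [map_sub, map_smul, smul_eq_mul] at h1
  have h2 := hL' 0 0
  simp only [pow_zero, mul_one] at h2
  have h3 : L p = L' Q := by
    simp only [L', LinearMap.comp_apply, LinearMap.mulLeft_apply, ← hfac]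
  rw [h3]
  have := mul_pos hε h2
  linarith

/-- Sequence version of complete monotonicity. -/
def CMSeq (F : ℕ → ℝ → ℝ) : Prop :=
  ∀ k : ℕ, ∀ x : ℝ, 0 < x → 0 < F k x ∧ HasDerivAt (F k) (-F (k + 1) x) x

lemma CMSeq.shift {F : ℕ → ℝ → ℝ} (h : CMSeq F) : CMSeq (fun k x => F k (x + 1)) :=
  fun k x hx => ⟨(h k (x + 1) (by linarith)).1, (h k (x + 1) (by linarith)).2.comp_add_const x 1⟩

lemma CMSeq.diff {F : ℕ → ℝ → ℝ} (h : CMSeq F) : CMSeq (fun k x => F k x - F k (x + 1)) := by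
  intro k x hx
  constructor
  · have : StrictAntiOn (F k) (Set.Ioi 0) := by
      apply strictAntiOn_of_deriv_neg (convex_Ioi 0)
      · exact fun y hy => (h k y hy).2.continuousAt.continuousWithinAt
      · intro y hy
        rw [interior_Ioi] at hy
        rw [(h k y hy).2.deriv]
        have := (h (k + 1) y hy).1
        linarith
    have := this (show x ∈ Set.Ioi 0 from hx) (show x + 1 ∈ Set.Ioi 0 by
      simp only [Set.mem_Ioi]; linarith) (by linarith)
    simp only; linarith
  · have := (h k x hx).2.sub (h.shift k x hx).2
    exact this.congr_deriv (by ring)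

open Polynomial in
/-- The moment functional `X^m ↦ f (m+1)`. -/
noncomputable def momL (f : ℝ → ℝ) : ℝ[X] →ₗ[ℝ] ℝ :=
  Polynomial.lsum fun m => (LinearMap.id : ℝ →ₗ[ℝ] ℝ).smulRight (f (m + 1))

open Polynomial in
lemma momL_CX (f : ℝ → ℝ) (c : ℝ) (m : ℕ) : momL f (C c * X ^ m) = c * f (m + 1) := by
  rw [C_mul_X_pow_eq_monomial]
  simp [momL, lsum_apply, sum_monomial_index]

open Polynomial in
lemma momL_X (f : ℝ → ℝ) (q : ℝ[X]) : momL f (X * q) = momL (fun x => f (x + 1)) q := by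
  induction q using Polynomial.induction_on' with
  | add p q hp hq => rw [mul_add, map_add, map_add, hp, hq]
  | monomial n a =>
    rw [← C_mul_X_pow_eq_monomial, momL_CX]
    have : X * (C a * X ^ n) = C a * X ^ (n + 1) := by ring
    rw [this, momL_CX]; push_cast; rfl

open Polynomial in
lemma momL_one_sub (f : ℝ → ℝ) (q : ℝ[X]) :
    momL f ((1 - X) * q) = momL (fun x => f x - f (x + 1)) q := by
  rw [sub_mul, one_mul, map_sub, momL_X]
  induction q using Polynomial.induction_on' with
  | add p q hp hq => simp only [map_add]; rw [← hp, ← hq]; ring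
  | monomial n a =>
    rw [← C_mul_X_pow_eq_monomial, momL_CX, momL_CX, momL_CX]; ring

open Polynomial in
lemma momL_pos (i j : ℕ) : ∀ F : ℕ → ℝ → ℝ, CMSeq F →
    0 < momL (F 0) (X ^ i * (1 - X) ^ j) := by
  induction i with
  | succ i ih =>
    intro F hF
    have : (X : ℝ[X]) ^ (i + 1) * (1 - X) ^ j = X * (X ^ i * (1 - X) ^ j) := by ring
    rw [this, momL_X]
    exact ih _ hF.shift
  | zero =>
    induction j with
    | zero =>
      intro F hF
      have := momL_CX (F 0) 1 0
      simp only [C_1, one_mul] at this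
      simp only [pow_zero, mul_one] at this ⊢
      rw [this]
      exact (hF 0 _ (by norm_num)).1
    | succ j ih =>
      intro F hF
      have : (X : ℝ[X]) ^ 0 * (1 - X) ^ (j + 1) = (1 - X) * (X ^ 0 * (1 - X) ^ j) := by ring
      rw [this, momL_one_sub]
      exact ih _ hF.diff

lemma CompletelyMonotonic.cmSeq {f : ℝ → ℝ} (hf : CompletelyMonotonic f) :
    ∃ F : ℕ → ℝ → ℝ, CMSeq F ∧ F 0 = f := by
  refine ⟨fun k x => (-1 : ℝ) ^ k * iteratedDerivWithin k f (Set.Ioi 0) x, ?_, ?_⟩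
  · intro k x hx
    refine ⟨hf.2 k x hx, ?_⟩
    have hd : DifferentiableOn ℝ (iteratedDerivWithin k f (Set.Ioi 0)) (Set.Ioi 0) :=
      hf.1.differentiableOn_iteratedDerivWithin (by exact_mod_cast WithTop.coe_lt_top k)
        (uniqueDiffOn_Ioi 0)
    have hnh : Set.Ioi (0 : ℝ) ∈ nhds x := Ioi_mem_nhds hx
    have h1 : HasDerivAt (iteratedDerivWithin k f (Set.Ioi 0))
        (iteratedDerivWithin (k + 1) f (Set.Ioi 0) x) x := by
      rw [iteratedDerivWithin_succ, derivWithin_of_mem_nhds hnh]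
      exact ((hd x hx).differentiableAt hnh).hasDerivAt
    have := h1.const_mul ((-1 : ℝ) ^ k)
    exact this.congr_deriv (by ring)
  · funext x; simp

/-- Closed form of the one-dimensional sum. -/
lemma closed_form (N : ℕ) (hN : 0 < N) (w : ℂ) (hw : w ^ (2 * N) = 1) (x : ℝ) :
    (∑ j ∈ Finset.range (2 * N), (x : ℂ) ^ (min j (2 * N - j)) * w ^ j) *
      ((1 - w * x) * (1 - w⁻¹ * x)) = (1 - w ^ N * x ^ N) * (1 - x ^ 2) := by
  have hw0 : w ≠ 0 := by
    rintro rfl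
    rw [zero_pow (by omega)] at hw
    exact zero_ne_one hw
  have hs : w⁻¹ ^ N = w ^ N := by
    rw [inv_pow]
    apply inv_eq_of_mul_eq_one_left
    rw [← pow_add, ← two_mul, hw]
  have hsum : (∑ j ∈ Finset.range (2 * N), (x : ℂ) ^ (min j (2 * N - j)) * w ^ j) =
      ∑ j ∈ Finset.range N, (w * x) ^ j + (w⁻¹ * x) * ∑ j ∈ Finset.range N, (w⁻¹ * x) ^ j := by
    rw [two_mul, Finset.sum_range_add]
    congr 1
    · refine Finset.sum_congr rfl fun j hj => ?_
      have := Finset.mem_range.1 hj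
      rw [min_eq_left (by omega), mul_pow, mul_comm]
    · rw [← Finset.sum_range_reflect, Finset.mul_sum]
      refine Finset.sum_congr rfl fun j hj => ?_
      have := Finset.mem_range.1 hj
      have e : N + N - (N + (N - 1 - j)) = j + 1 := by omega
      rw [e, min_eq_right (by omega)]
      have e2 : w ^ (N + (N - 1 - j)) = w⁻¹ ^ (j + 1) := by
        rw [inv_pow]
        apply eq_inv_of_mul_eq_one_left
        rw [← pow_add, ← hw]
        congr 1; omega
      rw [e2]; ring
  have g1 := mul_neg_geom_sum (w * (x : ℂ)) N
  have g2 := mul_neg_geom_sum (w⁻¹ * (x : ℂ)) N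
  rw [mul_pow] at g1 g2
  rw [hs] at g2
  rw [hsum]
  have hwi : w * w⁻¹ = 1 := mul_inv_cancel₀ hw0
  set S1 := ∑ j ∈ Finset.range N, (w * (x : ℂ)) ^ j
  set S2 := ∑ j ∈ Finset.range N, (w⁻¹ * (x : ℂ)) ^ j
  linear_combination (1 - w⁻¹ * x) * g1 + (w⁻¹ * x) * (1 - w * x) * g2
    - (1 - w ^ N * x ^ N) * x ^ 2 * hwi

lemma sq_eq_one_cases {z : ℂ} (h : z ^ 2 = 1) : z = 1 ∨ z = -1 := by
  have : (z - 1) * (z + 1) = 0 := by linear_combination h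
  rcases mul_eq_zero.1 this with h | h
  · left; linear_combination h
  · right; linear_combination h

lemma single_factor (n : ℕ) [NeZero n] (hn : n = 2 ∨ 4 ∣ n) (x : ℝ) (hx0 : 0 < x) (hx1 : x < 1) :
    ∃ b : ℝ, 0 < b ∧ ∀ ψ : AddChar (ZMod n) ℂ, ∃ r : ℝ,
      (∑ a : ZMod n, ((x : ℂ) ^ (min a.val (n - a.val))) * ψ a) = r ∧ b ≤ r ∧
      (ψ 1 ≠ -1 → b < r) ∧ (ψ 1 = -1 → r = b) := by
  have hn0 : n ≠ 0 := NeZero.ne n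
  have hval : ∀ ψ : AddChar (ZMod n) ℂ, ∀ a : ZMod n, ψ a = (ψ 1) ^ a.val := by
    intro ψ a
    rw [← AddChar.map_nsmul_eq_pow]
    congr 1
    simp
  have hpow : ∀ ψ : AddChar (ZMod n) ℂ, (ψ 1) ^ n = 1 := by
    intro ψ
    rw [← AddChar.map_nsmul_eq_pow]
    simp
  have hsum : ∀ ψ : AddChar (ZMod n) ℂ,
      (∑ a : ZMod n, ((x : ℂ) ^ (min a.val (n - a.val))) * ψ a) =
      ∑ j ∈ Finset.range n, (x : ℂ) ^ (min j (n - j)) * (ψ 1) ^ j := by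
    intro ψ
    refine Finset.sum_bij (fun a _ => a.val) ?_ ?_ ?_ ?_
    · intro a _; exact Finset.mem_range.2 (ZMod.val_lt a)
    · intro a _ b _ h; exact ZMod.val_injective n h
    · intro j hj
      exact ⟨(j : ZMod n), Finset.mem_univ _, ZMod.val_cast_of_lt (Finset.mem_range.1 hj)⟩
    · intro a _; rw [hval ψ a]
  rcases hn with h2 | h4
  · refine ⟨1 - x, by linarith, fun ψ => ?_⟩
    have hp := hpow ψ
    rw [hsum]
    subst h2
    simp only [Finset.sum_range_succ, Finset.sum_range_zero]
    rcases sq_eq_one_cases hp with h | h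
    · refine ⟨1 + x, ?_, by linarith, fun _ => by linarith, fun h' => ?_⟩
      · rw [h]; norm_num
      · rw [h] at h'; norm_num at h'
    · refine ⟨1 - x, ?_, le_rfl, fun h' => absurd h h', fun _ => rfl⟩
      rw [h]; norm_num; ring
  · obtain ⟨M, rfl⟩ := h4
    have hM : 0 < M := Nat.pos_of_ne_zero (by rintro rfl; simp at hn0)
    have hxN : x ^ (2 * M) < 1 := pow_lt_one₀ hx0.le hx1 (by omega)
    have hxN0 : 0 < x ^ (2 * M) := pow_pos hx0 _
    have hx2 : 0 < 1 - x ^ 2 := by nlinarith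
    refine ⟨(1 - x ^ (2 * M)) * (1 - x ^ 2) / (1 + x) ^ 2, ?_, fun ψ => ?_⟩
    · apply div_pos (mul_pos (by linarith) hx2); positivity
    have hp := hpow ψ
    rw [hsum]
    set w := ψ 1 with hw
    have e4 : 4 * M = 2 * (2 * M) := by ring
    rw [e4] at hp ⊢
    have hcf := closed_form (2 * M) (by omega) w hp x
    set S := ∑ j ∈ Finset.range (2 * (2 * M)), (x : ℂ) ^ (min j (2 * (2 * M) - j)) * w ^ j
    have hnorm : ‖w‖ = 1 := Complex.norm_eq_one_of_pow_eq_one hp (by omega)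
    have hinv : w⁻¹ = (starRingEnd ℂ) w := Complex.inv_eq_conj hnorm
    have hsq : w.re * w.re + w.im * w.im = 1 := by
      rw [← Complex.normSq_apply, Complex.normSq_eq_norm_sq, hnorm]; norm_num
    have hD : (1 - w * x) * (1 - w⁻¹ * x) = ((1 - 2 * x * w.re + x ^ 2 : ℝ) : ℂ) := by
      rw [hinv]
      apply Complex.ext
      · simp [-Complex.ofReal_add, -Complex.ofReal_sub, -Complex.ofReal_mul, -Complex.ofReal_pow]
        linear_combination x ^ 2 * hsq
      · simp [-Complex.ofReal_add, -Complex.ofReal_sub, -Complex.ofReal_mul, -Complex.ofReal_pow]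
        ring
    have hre : w.re ≤ 1 ∧ -1 ≤ w.re := by constructor <;> nlinarith [sq_nonneg w.im]
    have hre' : w ≠ -1 → -1 < w.re := by
      intro h
      refine lt_of_le_of_ne hre.2 fun h' => h ?_
      have him : w.im = 0 := by
        rw [← h'] at hsq
        nlinarith
      apply Complex.ext
      · simp [← h']
      · simp [him]
    have hDpos : 0 < 1 - 2 * x * w.re + x ^ 2 := by nlinarith [hre.1]
    have hs : ∃ s : ℝ, w ^ (2 * M) = s ∧ s ≤ 1 ∧ (w = -1 → s = 1) := by
      have : (w ^ (2 * M)) ^ 2 = 1 := by rw [← pow_mul, mul_comm, hp]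
      rcases sq_eq_one_cases this with h | h
      · exact ⟨1, by simpa using h, le_rfl, fun _ => rfl⟩
      · refine ⟨-1, by simpa using h, by norm_num, fun h' => ?_⟩
        rw [h', pow_mul] at h
        norm_num at h
    obtain ⟨s, hs, hs1, hs2⟩ := hs
    refine ⟨(1 - s * x ^ (2 * M)) * (1 - x ^ 2) / (1 - 2 * x * w.re + x ^ 2), ?_, ?_, ?_, ?_⟩
    · rw [hD, hs] at hcf
      have hne : ((1 - 2 * x * w.re + x ^ 2 : ℝ) : ℂ) ≠ 0 := by exact_mod_cast hDpos.ne'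
      rw [Complex.ofReal_div, eq_div_iff hne, hcf]
      push_cast; ring
    · apply div_le_div₀
      · apply mul_nonneg _ hx2.le; nlinarith
      · apply mul_le_mul_of_nonneg_right _ hx2.le; nlinarith
      · exact hDpos
      · nlinarith [hre.2]
    · intro h
      apply div_lt_div₀'
      · apply mul_le_mul_of_nonneg_right _ hx2.le; nlinarith
      · nlinarith [hre' h]
      · apply mul_pos _ hx2; nlinarith
      · exact hDpos
    · intro h
      rw [hs2 h, h]
      simp
      ring

theorem toric_eigenvalue_unique_min (d : ℕ) (hd : 0 < d) (n : Fin d → ℕ) [∀ i, NeZero (n i)]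
    (hn : ∀ i, n i = 2 ∨ 4 ∣ n i)
    (f : ℝ → ℝ) (hf : CompletelyMonotonic f) :
    let δ : (∀ i, ZMod (n i)) → ℕ := fun g => ∑ i, min ((g i).val) (n i - (g i).val)
    let lam : AddChar (∀ i, ZMod (n i)) ℂ → ℝ := fun χ =>
      (∑ g ∈ Finset.univ.erase (0 : ∀ i, ZMod (n i)), (f (δ g) : ℂ) * χ g).re
    ∀ χ₀ χ : AddChar (∀ i, ZMod (n i)) ℂ,
      (∀ g : ∀ i, ZMod (n i), χ₀ g = (-1 : ℂ) ^ (∑ i, (g i).val)) →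
      χ ≠ χ₀ → lam χ₀ < lam χ := by
  intro δ lam χ₀ χ hχ₀ hne
  obtain ⟨F, hF, rfl⟩ := hf.cmSeq
  -- components of characters
  let comp : AddChar (∀ i, ZMod (n i)) ℂ → ∀ i, AddChar (ZMod (n i)) ℂ := fun φ i =>
    φ.compAddMonoidHom (AddMonoidHom.single (fun i => ZMod (n i)) i)
  have hcomp : ∀ φ : AddChar (∀ i, ZMod (n i)) ℂ, ∀ g, φ g = ∏ i, comp φ i (g i) := by
    intro φ g
    conv_lhs => rw [← Finset.univ_sum_single g]
    have h := map_prod φ.toMonoidHom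
      (fun i => Multiplicative.ofAdd (Pi.single i (g i) : ∀ i, ZMod (n i))) Finset.univ
    exact h
  have hval : ∀ i, ∀ ψ : AddChar (ZMod (n i)) ℂ, ∀ a : ZMod (n i), ψ a = (ψ 1) ^ a.val := by
    intro i ψ a
    rw [← AddChar.map_nsmul_eq_pow]
    congr 1
    simp
  have hn2 : ∀ i, 1 < n i := by
    intro i
    have := NeZero.ne (n i)
    rcases hn i with h | ⟨k, h⟩ <;> omega
  have hc0 : ∀ i, comp χ₀ i 1 = -1 := by
    intro i
    have : comp χ₀ i 1 = χ₀ (Pi.single i 1) := rfl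
    rw [this, hχ₀, Finset.sum_eq_single i]
    · have : Fact (1 < n i) := ⟨hn2 i⟩
      simp [ZMod.val_one]
    · intro j _ hj
      simp [Pi.single_eq_of_ne hj]
    · simp
  have hex : ∃ i, comp χ i 1 ≠ -1 := by
    by_contra hcon
    push Not at hcon
    apply hne
    ext g
    rw [hcomp χ, hcomp χ₀]
    refine Finset.prod_congr rfl fun i _ => ?_
    rw [hval i (comp χ i), hval i (comp χ₀ i), hcon, hc0]
  -- product formula
  have hprod : ∀ φ : AddChar (∀ i, ZMod (n i)) ℂ, ∀ x : ℝ,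
      ∑ g, (x : ℂ) ^ (δ g) * φ g =
        ∏ i, ∑ a : ZMod (n i), ((x : ℂ) ^ (min a.val (n i - a.val))) * comp φ i a := by
    intro φ x
    rw [Finset.prod_univ_sum, Fintype.piFinset_univ]
    refine Finset.sum_congr rfl fun g _ => ?_
    rw [hcomp φ g, Finset.prod_mul_distrib, Finset.prod_pow_eq_pow_sum]
  have hlt : ∀ x : ℝ, 0 < x → x < 1 →
      (∑ g, (x : ℂ) ^ (δ g) * χ₀ g).re < (∑ g, (x : ℂ) ^ (δ g) * χ g).re := by
    intro x h0 h1
    choose b hb hb' using fun i => single_factor (n i) (hn i) x h0 h1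
    choose r hr using fun i => hb' i (comp χ i)
    choose r0 hr0 using fun i => hb' i (comp χ₀ i)
    rw [hprod, hprod]
    have e0 : ∀ i, r0 i = b i := fun i => (hr0 i).2.2.2 (hc0 i)
    simp only [fun i => (hr i).1, fun i => (hr0 i).1, e0]
    rw [← Complex.ofReal_prod, ← Complex.ofReal_prod, Complex.ofReal_re, Complex.ofReal_re]
    obtain ⟨i, hi⟩ := hex
    exact Finset.prod_lt_prod (fun i _ => hb i) (fun i _ => (hr i).2.1)
      ⟨i, Finset.mem_univ i, (hr i).2.2.1 hi⟩
  have hδ : ∀ g, g ≠ 0 → 1 ≤ δ g := by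
    intro g hg
    obtain ⟨i, hi⟩ := Function.ne_iff.1 hg
    have h1 : min ((g i).val) (n i - (g i).val) ≤ δ g :=
      Finset.single_le_sum (f := fun i => min ((g i).val) (n i - (g i).val))
        (fun _ _ => Nat.zero_le _) (Finset.mem_univ i)
    have h2 : (g i).val < n i := ZMod.val_lt _
    have h3 : (g i).val ≠ 0 := by
      rw [Ne, ZMod.val_eq_zero]; exact hi
    refine le_trans ?_ h1
    rw [le_min_iff]; omega
  let P : Polynomial ℝ := ∑ g ∈ Finset.univ.erase (0 : ∀ i, ZMod (n i)),
    Polynomial.C ((χ g).re - (χ₀ g).re) * Polynomial.X ^ (δ g - 1)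
  have hPpos : ∀ x : ℝ, 0 < x → x < 1 → 0 < P.eval x := by
    intro x h0 h1
    have hxP : x * P.eval x = (∑ g, (x : ℂ) ^ (δ g) * χ g).re - (∑ g, (x : ℂ) ^ (δ g) * χ₀ g).re := by
      rw [Complex.re_sum, Complex.re_sum, ← Finset.sum_sub_distrib,
        ← Finset.add_sum_erase _ _ (Finset.mem_univ (0 : ∀ i, ZMod (n i)))]
      simp only [AddChar.map_zero_eq_one, sub_self, zero_add, P, Polynomial.eval_finsetSum,
        Finset.mul_sum]
      refine Finset.sum_congr rfl fun g hg => ?_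
      have hg' := hδ g (Finset.ne_of_mem_erase hg)
      rw [← Complex.ofReal_pow, Complex.re_ofReal_mul, Complex.re_ofReal_mul]
      obtain ⟨k, hk⟩ := Nat.exists_eq_add_of_le hg'
      rw [hk]
      simp
      ring
    have := hlt x h0 h1
    have h2 : 0 < x * P.eval x := by rw [hxP]; linarith
    exact pos_of_mul_pos_right h2 h0.le
  have hfin := L_pos (momL (F 0)) (fun i j => momL_pos i j F hF) P hPpos
  have hL : momL (F 0) P = lam χ - lam χ₀ := by
    simp only [P, lam, map_sum, momL_CX, Complex.re_sum, Complex.re_ofReal_mul]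
    rw [← Finset.sum_sub_distrib]
    refine Finset.sum_congr rfl fun g hg => ?_
    have hg' := hδ g (Finset.ne_of_mem_erase hg)
    have : ((δ g - 1 : ℕ) : ℝ) + 1 = δ g := by
      rw [Nat.cast_sub hg']; push_cast; ring
    rw [this]; ring
  rw [hL] at hfin
  linarith
end

section
/- Let each n_i be either 2 or a multiple of 4, G = ∏_i ℤ/n_i with Lee distance δ, f : ℝ₊ → ℝ₊ completely monotonic, and u(g,h) = f(δ(g,h)). Then among all subsets S ⊆ G of cardinality |G|/2, both the total energy E_tot(S) and the maximal energy E_max(S) are minimised exactly by the two checkerboard configurations S_even = {g : ∑_i g_i even} and S_odd = {g : ∑_i g_i odd}. -/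
namespace Checker
open Polynomial Filter Topology

def CMs (f : ℝ → ℝ) : Prop := ∃ F : ℕ → ℝ → ℝ, (∀ x, 0 < x → F 0 x = f x) ∧
  ∀ k x, 0 < x → HasDerivAt (F k) (F (k+1) x) x ∧ 0 < (-1 : ℝ)^k * F k x

lemma CMs.of {f : ℝ → ℝ} (hf : CompletelyMonotonic f) : CMs f := by
  refine ⟨fun k => iteratedDerivWithin k f (Set.Ioi 0), fun x hx => by simp, fun k x hx => ⟨?_, hf.2 k x hx⟩⟩
  have h1 := hf.1.differentiableOn_iteratedDerivWithin (m := k) (by exact_mod_cast (ENat.natCast_lt_top k)) (uniqueDiffOn_Ioi 0)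
  have h2 := (h1 x hx).hasDerivWithinAt
  have h3 := h2.hasDerivAt (Ioi_mem_nhds hx)
  simpa only [iteratedDerivWithin_succ] using h3

lemma CMs.shift {f : ℝ → ℝ} (hf : CMs f) : CMs (fun x => f (x+1)) := by
  obtain ⟨F, h0, h⟩ := hf
  refine ⟨fun k x => F k (x+1), fun x hx => h0 _ (by linarith), fun k x hx => ⟨?_, (h k (x+1) (by linarith)).2⟩⟩
  exact HasDerivAt.comp_add_const x 1 (h k (x+1) (by linarith)).1

lemma CMs.diff {f : ℝ → ℝ} (hf : CMs f) : CMs (fun x => f x - f (x+1)) := by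
  obtain ⟨F, h0, h⟩ := hf
  refine ⟨fun k x => F k x - F k (x+1), fun x hx => by
    simp only; rw [h0 _ hx, h0 _ (by linarith)],
    fun k x hx => ⟨?_, ?_⟩⟩
  · exact (h k x hx).1.sub (HasDerivAt.comp_add_const x 1 (h k (x+1) (by linarith)).1)
  · have hanti : StrictAntiOn (fun x => (-1 : ℝ)^k * F k x) (Set.Ioi 0) := by
      apply strictAntiOn_of_deriv_neg (convex_Ioi 0)
      · intro y hy
        exact ((h k y hy).1.const_mul _).continuousAt.continuousWithinAt
      · intro y hy
        rw [interior_Ioi] at hy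
        rw [((h k y hy).1.const_mul ((-1 : ℝ)^k)).deriv]
        have := (h (k+1) y hy).2
        rw [pow_succ] at this
        linarith
    have := hanti (a := x) hx (b := x+1) (by simp; linarith) (by linarith)
    simp only at this
    linarith

lemma CMs.pos {f : ℝ → ℝ} (hf : CMs f) {x : ℝ} (hx : 0 < x) : 0 < f x := by
  obtain ⟨F, h0, h⟩ := hf
  have := (h 0 x hx).2
  rw [h0 x hx] at this
  simpa using this

noncomputable def L (f : ℝ → ℝ) : ℝ[X] →ₗ[ℝ] ℝ :=
  Polynomial.lsum (fun i => (f ((i : ℝ)+1)) • LinearMap.id)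

lemma L_monomial (f : ℝ → ℝ) (i : ℕ) (a : ℝ) : L f (monomial i a) = a * f (i+1) := by
  simp [L, Polynomial.sum_monomial_index, mul_comm]

lemma L_CXpow (f : ℝ → ℝ) (i : ℕ) (a : ℝ) : L f (C a * X^i) = a * f (i+1) := by
  rw [C_mul_X_pow_eq_monomial, L_monomial]

lemma L_X_mul (f : ℝ → ℝ) (P : ℝ[X]) : L f (X * P) = L (fun x => f (x+1)) P := by
  induction P using Polynomial.induction_on' with
  | add p q hp hq => rw [mul_add, map_add, map_add, hp, hq]
  | monomial n a => rw [X_mul_monomial, L_monomial, L_monomial]; push_cast; ring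

lemma L_one_sub_mul (f : ℝ → ℝ) (P : ℝ[X]) :
    L f ((1 - X) * P) = L (fun x => f x - f (x+1)) P := by
  induction P using Polynomial.induction_on' with
  | add p q hp hq => rw [mul_add, map_add, map_add, hp, hq]
  | monomial n a =>
    rw [sub_mul, one_mul, map_sub, L_X_mul, L_monomial, L_monomial, L_monomial]; ring

lemma L_basis_pos (k n : ℕ) : ∀ f : ℝ → ℝ, CMs f → 0 < L f (X^k * (1 - X)^n) := by
  induction k with
  | zero =>
    induction n with
    | zero =>
      intro f hf
      have := L_monomial f 0 1
      simp only [pow_zero, mul_one]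
      rw [monomial_zero_left, C_1] at this
      rw [this]
      simpa using hf.pos one_pos
    | succ n ih =>
      intro f hf
      rw [pow_succ', mul_left_comm, L_one_sub_mul]
      exact ih _ hf.diff
  | succ k ih =>
    intro f hf
    rw [pow_succ', mul_assoc, L_X_mul]
    exact ih _ hf.shift

/-- Uniform estimate for the Hausdorff moment argument. -/
lemma choose_est (j : ℕ) : ∃ e : ℕ → ℝ, Tendsto e atTop (𝓝 0) ∧
    ∀ᶠ n : ℕ in atTop, ∀ k ≤ n, |(k.choose j : ℝ) / (n.choose j) - ((k : ℝ)/n)^j| ≤ e n := by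
  induction j with
  | zero => exact ⟨fun _ => 0, tendsto_const_nhds, by simp⟩
  | succ j ih =>
    obtain ⟨e, he, h⟩ := ih
    refine ⟨fun n => e n + j / ((n : ℝ) - j), ?_, ?_⟩
    · rw [show (0:ℝ) = 0 + 0 by simp]
      refine he.add ?_
      apply Tendsto.div_atTop tendsto_const_nhds
      exact tendsto_atTop_add_const_right _ _ tendsto_natCast_atTop_atTop
    · filter_upwards [h, eventually_ge_atTop (2*j+1)] with n hn hj k hk
      have hk' := hn k hk
      have hnj : (2:ℝ)*j+1 ≤ n := by exact_mod_cast hj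
      have hj0 : (0:ℝ) ≤ j := Nat.cast_nonneg j
      have hk0 : (0:ℝ) ≤ k := Nat.cast_nonneg k
      have hkn : (k:ℝ) ≤ n := by exact_mod_cast hk
      have hn0 : (0:ℝ) < n := by linarith
      have hnj' : (0:ℝ) < n - j := by linarith
      have key : ∀ m : ℕ, (m.choose (j+1) : ℝ) * (j+1) = m.choose j * ((m:ℝ) - j) := by
        intro m
        have := Nat.choose_succ_right_eq m j
        rcases le_or_gt j m with hm | hm
        · rw [← Nat.cast_sub hm]; exact_mod_cast this
        · rw [Nat.choose_eq_zero_of_lt hm, Nat.choose_eq_zero_of_lt (by omega)]; simp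
      have hc : (0:ℝ) < n.choose j := by exact_mod_cast Nat.choose_pos (by omega)
      have hc' : (0:ℝ) < n.choose (j+1) := by exact_mod_cast Nat.choose_pos (by omega)
      have e1 : (k.choose (j+1) : ℝ) / (n.choose (j+1)) =
          (k.choose j : ℝ) / (n.choose j) * (((k:ℝ) - j)/((n:ℝ)-j)) := by
        rw [div_mul_div_comm, ← key, ← key]
        field_simp
      rw [e1, pow_succ]
      set c := (k.choose j : ℝ) / (n.choose j)
      set q := ((k:ℝ) - j)/((n:ℝ)-j)
      set t := (k:ℝ)/n
      have ht0 : 0 ≤ t := by positivity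
      have ht1 : t ≤ 1 := by rw [div_le_one hn0]; exact hkn
      have hq : |q| ≤ 1 := by
        rw [abs_div, abs_of_pos hnj', div_le_one hnj', abs_le]; constructor <;> linarith
      have hqt : |q - t| ≤ j/((n:ℝ)-j) := by
        have : q - t = -(j * (1 - t) / (n - j)) := by
          simp only [q, t]; field_simp; ring
        rw [this, abs_neg, abs_of_nonneg (by apply div_nonneg (mul_nonneg hj0 (by linarith)) hnj'.le)]
        gcongr
        nlinarith
      have : c * q - t^j * t = (c - t^j) * q + t^j * (q - t) := by ring
      rw [this]
      refine (abs_add_le _ _).trans (add_le_add ?_ ?_)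
      · rw [abs_mul]
        calc _ ≤ |c - t^j| * 1 := by gcongr
          _ ≤ _ := by simpa using hk'
      · rw [abs_mul, abs_of_nonneg (pow_nonneg ht0 j)]
        calc _ ≤ 1 * |q - t| := by gcongr; exact pow_le_one₀ ht0 ht1
          _ ≤ _ := by simpa using hqt

lemma X_pow_eq (n j : ℕ) (hj : j ≤ n) : (X^j : ℝ[X]) =
    ∑ k ∈ Finset.range (n+1), C ((k.choose j : ℝ)/(n.choose j)) * bernsteinPolynomial ℝ n k := by
  have h1 : (X^j : ℝ[X]) = X^j * (X + (1 - X))^(n-j) := by simp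
  rw [h1, add_pow, Finset.mul_sum]
  rw [show n + 1 = j + (n - j + 1) by omega, Finset.sum_range_add _ j (n - j + 1)]
  rw [Finset.sum_eq_zero (s := Finset.range j), zero_add]
  · apply Finset.sum_congr rfl
    intro i hi
    have hi' : i ≤ n - j := by simpa [Nat.lt_succ_iff] using hi
    have h2 := Nat.choose_mul (n := j + (n-j)) (k := j + i) (s := j) (by omega)
    rw [bernsteinPolynomial]
    have h3 : j + (n-j) = n := by omega
    simp only [h3] at h2 ⊢
    have hc : (0:ℝ) < n.choose j := by exact_mod_cast Nat.choose_pos hj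
    have h4 : ((n-j).choose i : ℝ) = ((j+i).choose j : ℝ)/(n.choose j) * n.choose (j+i) := by
      have h5 : (j + i) - j = i := by omega
      rw [h5] at h2
      have h2' : (n.choose (j+i) : ℝ) * (j+i).choose j = n.choose j * (n-j).choose i := by exact_mod_cast h2
      field_simp
      linarith
    have h6 : (((n-j).choose i : ℕ) : ℝ[X]) = C (((n-j).choose i : ℝ)) := by simp
    rw [h6, h4, C_mul, show n - (j+i) = n - j - i by omega, pow_add]
    simp only [C_eq_natCast]
    ring
  · intro k hk
    rw [Nat.choose_eq_zero_of_lt (by simpa using hk)]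
    simp

lemma L_bern_nonneg {f : ℝ → ℝ} (hf : CMs f) (n k : ℕ) : 0 ≤ L f (bernsteinPolynomial ℝ n k) := by
  rw [bernsteinPolynomial, mul_assoc, ← C_eq_natCast, ← smul_eq_C_mul, map_smul, smul_eq_mul]
  exact mul_nonneg (by positivity) (L_basis_pos _ _ f hf).le

lemma L_nonneg {f : ℝ → ℝ} (hf : CMs f) (P : ℝ[X]) (hP : ∀ x, 0 ≤ x → x ≤ 1 → 0 ≤ P.eval x) :
    0 ≤ L f P := by
  choose e he h using choose_est
  set D := P.natDegree
  have hlim : Tendsto (fun n => -((∑ j ∈ Finset.range (D+1), |P.coeff j| * e j n) * L f 1)) atTop (𝓝 0) := by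
    have : Tendsto (fun n => ∑ j ∈ Finset.range (D+1), |P.coeff j| * e j n) atTop (𝓝 (∑ j ∈ Finset.range (D+1), |P.coeff j| * 0)) :=
      tendsto_finsetSum _ fun j _ => (he j).const_mul _
    simpa using (this.mul_const (L f 1)).neg
  refine le_of_tendsto_of_frequently hlim (Eventually.frequently ?_)
  have hall : ∀ᶠ n : ℕ in atTop, ∀ j ∈ Finset.range (D+1), ∀ k ≤ n, |(k.choose j : ℝ) / (n.choose j) - ((k : ℝ)/n)^j| ≤ e j n := by
    rw [Finset.eventually_all]
    exact fun j _ => h j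
  filter_upwards [hall, eventually_ge_atTop (D+1)] with n hn hDn
  set w : ℕ → ℝ := fun k => L f (bernsteinPolynomial ℝ n k)
  have hw : ∀ k, 0 ≤ w k := fun k => L_bern_nonneg hf n k
  have hXj : ∀ j ≤ n, L f (X^j) = ∑ k ∈ Finset.range (n+1), ((k.choose j : ℝ)/(n.choose j)) * w k := by
    intro j hj
    conv_lhs => rw [X_pow_eq n j hj]
    rw [map_sum]
    refine Finset.sum_congr rfl fun k _ => ?_
    rw [← smul_eq_C_mul, map_smul, smul_eq_mul]
  have hone : L f 1 = ∑ k ∈ Finset.range (n+1), w k := by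
    have := hXj 0 (by omega)
    simpa using this
  have hLP : L f P = ∑ k ∈ Finset.range (n+1), (∑ j ∈ Finset.range (D+1), P.coeff j * ((k.choose j : ℝ)/(n.choose j))) * w k := by
    conv_lhs => rw [P.as_sum_range_C_mul_X_pow]
    rw [map_sum]
    simp_rw [Finset.sum_mul]
    rw [Finset.sum_comm]
    refine Finset.sum_congr rfl fun j hj => ?_
    rw [← smul_eq_C_mul, map_smul, smul_eq_mul, hXj j (by simp at hj; omega), Finset.mul_sum]
    refine Finset.sum_congr rfl fun k _ => ?_
    ring
  rw [hLP, hone, Finset.mul_sum, ← Finset.sum_neg_distrib]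
  refine Finset.sum_le_sum fun k hk => ?_
  have hk' : k ≤ n := by simpa [Nat.lt_succ_iff] using hk
  rw [← neg_mul]
  refine mul_le_mul_of_nonneg_right ?_ (hw k)
  have hev := hP ((k:ℝ)/n) (by positivity) (by
    apply div_le_one_of_le₀ (by exact_mod_cast hk') (by positivity))
  rw [eval_eq_sum_range] at hev
  have : ∑ j ∈ Finset.range (D+1), P.coeff j * ((k:ℝ)/n)^j - ∑ j ∈ Finset.range (D+1), P.coeff j * ((k.choose j : ℝ)/(n.choose j)) ≤ ∑ j ∈ Finset.range (D+1), |P.coeff j| * e j n := by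
    rw [← Finset.sum_sub_distrib]
    refine Finset.sum_le_sum fun j hj => ?_
    rw [← mul_sub]
    refine (le_abs_self _).trans ?_
    rw [abs_mul, abs_sub_comm]
    exact mul_le_mul_of_nonneg_left (hn j hj k hk') (abs_nonneg _)
  linarith

lemma L_pos {f : ℝ → ℝ} (hf : CMs f) (P : ℝ[X]) (hP : ∀ x, 0 < x → x < 1 → 0 < P.eval x) :
    0 < L f P := by
  have hP0 : P ≠ 0 := by
    rintro rfl
    have := hP (1/2) (by norm_num) (by norm_num)
    simp at this
  obtain ⟨Q, hQ, hQ0⟩ := exists_eq_pow_rootMultiplicity_mul_and_not_dvd P hP0 0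
  have hQne : Q ≠ 0 := by rintro rfl; simp at hQ0
  obtain ⟨R, hR, hR1⟩ := exists_eq_pow_rootMultiplicity_mul_and_not_dvd Q hQne 1
  set a := rootMultiplicity 0 P
  set b := rootMultiplicity 1 Q
  obtain ⟨T, hT⟩ : ∃ T : ℝ[X], T = C ((-1)^b) * R := ⟨_, rfl⟩
  have hPT : P = X^a * (1 - X)^b * T := by
    rw [hT, hQ, hR, show (1 - X : ℝ[X]) = -(X - C 1) by simp, neg_pow]
    simp only [C_0, sub_zero, C_pow, C_neg, C_1]
    have : ((-1:ℝ[X])^b * (-1)^b) = 1 := by rw [← mul_pow]; simp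
    linear_combination (-X^a * (X-1)^b * R) * this
  have hT0 : T.eval 0 ≠ 0 := by
    intro h0
    have : Q.eval 0 = 0 := by
      rw [hT, eval_mul, eval_C] at h0
      rw [hR, eval_mul]
      have := (mul_eq_zero.mp h0).resolve_left (by simp)
      rw [this, mul_zero]
    exact hQ0 (dvd_iff_isRoot.mpr this)
  have hT1 : T.eval 1 ≠ 0 := by
    intro h0
    rw [hT, eval_mul, eval_C] at h0
    have := (mul_eq_zero.mp h0).resolve_left (by simp)
    exact hR1 (dvd_iff_isRoot.mpr this)
  have hTpos : ∀ x ∈ Set.Ioo (0:ℝ) 1, 0 ≤ T.eval x := by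
    intro x hx
    have h1 := hP x hx.1 hx.2
    rw [hPT] at h1
    simp only [eval_mul, eval_pow, eval_X, eval_sub, eval_one] at h1
    have h2 : 0 < x^a * (1-x)^b := mul_pos (pow_pos hx.1 _) (pow_pos (by linarith [hx.2]) _)
    exact (pos_of_mul_pos_right h1 h2.le).le
  have hTnn : ∀ x ∈ Set.Icc (0:ℝ) 1, 0 ≤ T.eval x := by
    intro x hx
    rw [← closure_Ioo (by norm_num : (0:ℝ) ≠ 1)] at hx
    have : IsClosed {x : ℝ | 0 ≤ T.eval x} := isClosed_le continuous_const T.continuous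
    exact closure_minimal hTpos this hx
  have hTp : ∀ x ∈ Set.Icc (0:ℝ) 1, 0 < T.eval x := by
    intro x hx
    refine lt_of_le_of_ne (hTnn x hx) ?_
    rcases eq_or_lt_of_le hx.1 with h | h
    · rw [← h]; exact hT0.symm
    rcases eq_or_lt_of_le hx.2 with h' | h'
    · rw [h']; exact hT1.symm
    intro h0
    have h1 := hP x h h'
    rw [hPT] at h1
    simp [← h0] at h1
  obtain ⟨x0, hx0, hmin⟩ := isCompact_Icc.exists_isMinOn (Set.nonempty_Icc.mpr (zero_le_one' ℝ)) T.continuous.continuousOn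
  set ε := T.eval x0
  have hε : 0 < ε := hTp x0 hx0
  have h1 := L_nonneg hf (P - ε • (X^a * (1-X)^b)) (by
    intro x hx hx1
    have h2 : ε ≤ T.eval x := hmin ⟨hx, hx1⟩
    rw [hPT]
    simp only [eval_mul, eval_pow, eval_X, eval_sub, eval_one, eval_smul, smul_eq_mul]
    have h3 : 0 ≤ x^a * (1-x)^b := mul_nonneg (pow_nonneg hx _) (pow_nonneg (by linarith) _)
    nlinarith)
  rw [map_sub, map_smul, smul_eq_mul] at h1
  have := mul_pos hε (L_basis_pos a b f hf)
  linarith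

end Checker
namespace Checker
open Polynomial Filter Topology

lemma sum_zmod (n : ℕ) [NeZero n] (g : ℕ → ℂ) : ∑ x : ZMod n, g x.val = ∑ k ∈ Finset.range n, g k := by
  refine Finset.sum_nbij' (fun x => x.val) (fun k => (k : ZMod n)) ?_ ?_ ?_ ?_ ?_
  · intro x _; simpa using ZMod.val_lt x
  · intro x _; simp
  · intro x _; simp
  · intro k hk; simpa using ZMod.val_cast_of_lt (by simpa using hk)
  · intro x _; rfl

lemma char_val (n : ℕ) [NeZero n] (ψ : AddChar (ZMod n) ℂ) (x : ZMod n) : ψ x = ψ 1 ^ x.val := by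
  rw [← AddChar.map_nsmul_eq_pow]; simp

lemma cyc_val (m : ℕ) (hm : 0 < m) [NeZero (2*m)] (ψ : AddChar (ZMod (2*m)) ℂ) (ε : ℝ)
    (hε : ψ 1 ^ m = ε) (hε2 : ε * ε = 1) (r : ℝ) (hr : 0 < r) (hr1 : r < 1) :
    ∑ x : ZMod (2*m), ((r ^ (min x.val (2*m - x.val)) : ℝ) : ℂ) * ψ x =
      (((1 - r^2) * (1 - ε * r^m) / (1 - 2 * r * (ψ 1).re + r^2) : ℝ) : ℂ) ∧ |(ψ 1).re| ≤ 1 := by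
  have hconj := AddChar.inv_apply_eq_conj ψ 1
  have hnorm : ‖ψ 1‖ = 1 := AddChar.norm_apply ψ 1
  have hre : |(ψ 1).re| ≤ 1 := hnorm ▸ Complex.abs_re_le_norm _
  refine ⟨?_, hre⟩
  have hre' := abs_le.mp hre
  have hne : ψ 1 ≠ 0 := by intro h; rw [h] at hnorm; simp at hnorm
  set z := ψ 1 with hz
  set w := z⁻¹ with hw
  have hzw : z * w = 1 := mul_inv_cancel₀ hne
  have hsum : z + w = ((2 * z.re : ℝ) : ℂ) := by
    rw [hconj, Complex.add_conj]
  have hεC : (ε : ℂ) * ε = 1 := by exact_mod_cast hε2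
  have hwm : w ^ m = ε := by
    rw [hw, inv_pow, hε]
    exact (eq_inv_of_mul_eq_one_left hεC).symm
  have hzm : z ^ (2*m) = 1 := by rw [two_mul, pow_add, hε, hεC]
  have hterm : ∀ x : ZMod (2*m), ((r ^ (min x.val (2*m - x.val)) : ℝ) : ℂ) * ψ x
      = (fun k : ℕ => (r:ℂ) ^ (min k (2*m - k)) * z ^ k) x.val := by
    intro x
    rw [char_val _ ψ x]; push_cast; rfl
  rw [Finset.sum_congr rfl (fun x _ => hterm x),
    sum_zmod (2*m) (fun k : ℕ => (r:ℂ) ^ (min k (2*m - k)) * z ^ k)]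
  have hsplit : ∑ k ∈ Finset.range (2*m), (r:ℂ) ^ (min k (2*m - k)) * z ^ k =
      ∑ k ∈ Finset.range m, (r * z)^k + (r * w) * ∑ k ∈ Finset.range m, (r * w)^k := by
    rw [two_mul, Finset.sum_range_add _ m m]
    congr 1
    · refine Finset.sum_congr rfl fun k hk => ?_
      have : k < m := by simpa using hk
      rw [min_eq_left (by omega), mul_pow]
    · rw [← Finset.sum_range_reflect, Finset.mul_sum]
      refine Finset.sum_congr rfl fun k hk => ?_
      have hk' : k < m := by simpa using hk
      rw [min_eq_right (by omega), show m + m - (m + (m - 1 - k)) = k + 1 by omega, ← pow_succ', mul_pow]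
      congr 1
      have h1 : z ^ (m + (m-1-k)) * z^(k+1) = 1 := by
        rw [← pow_add, show m + (m-1-k) + (k+1) = 2*m by omega, hzm]
      rw [hw, inv_pow]
      exact eq_inv_of_mul_eq_one_left h1
  rw [hsplit]
  have hA := mul_neg_geom_sum ((r:ℂ) * z) m
  have hB := mul_neg_geom_sum ((r:ℂ) * w) m
  rw [mul_pow, hε] at hA
  rw [mul_pow, hwm] at hB
  set A := ∑ k ∈ Finset.range m, ((r:ℂ) * z)^k
  set B := ∑ k ∈ Finset.range m, ((r:ℂ) * w)^k
  have hden : (0:ℝ) < 1 - 2 * r * z.re + r^2 := by nlinarith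
  have hdenC : (1 - 2 * r * z.re + r^2 : ℂ) ≠ 0 := by exact_mod_cast hden.ne'
  push_cast
  rw [eq_div_iff hdenC]
  have hd : (1 - 2 * r * z.re + r^2 : ℂ) = (1 - r * z) * (1 - r * w) := by
    push_cast at hsum
    linear_combination (r:ℂ) * hsum - (r:ℂ)^2 * hzw
  rw [hd]
  linear_combination (1 - r * w) * hA + (r * w) * (1 - r * z) * hB - (1 - (ε:ℂ) * r^m) * (r:ℂ)^2 * hzw

lemma cyc_cmp (n : ℕ) [NeZero n] (hn : n = 2 ∨ 4 ∣ n) (ψ ψ0 : AddChar (ZMod n) ℂ) (h0 : ψ0 1 = -1)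
    (r : ℝ) (hr : 0 < r) (hr1 : r < 1) : ∃ v v0 : ℝ,
    ∑ x : ZMod n, ((r ^ (min x.val (n - x.val)) : ℝ) : ℂ) * ψ x = v ∧
    ∑ x : ZMod n, ((r ^ (min x.val (n - x.val)) : ℝ) : ℂ) * ψ0 x = v0 ∧
    0 < v0 ∧ v0 ≤ v ∧ (ψ ≠ ψ0 → v0 < v) := by
  obtain ⟨m, rfl⟩ : ∃ m, n = 2 * m := by
    rcases hn with h | ⟨k, h⟩
    · exact ⟨1, by omega⟩
    · exact ⟨2*k, by omega⟩
  have hm : 0 < m := by have := NeZero.ne (2*m); omega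
  have hz2 : ψ 1 ^ (2*m) = 1 := by
    rw [← AddChar.map_nsmul_eq_pow]
    have : (2*m) • (1 : ZMod (2*m)) = 0 := by rw [nsmul_eq_mul, mul_one]; exact ZMod.natCast_self _
    rw [this, AddChar.map_zero_eq_one]
  have hnorm : ‖ψ 1‖ = 1 := AddChar.norm_apply ψ 1
  have hne1 : ψ ≠ ψ0 → (ψ 1).re ≠ -1 := by
    intro h h1
    apply h
    ext x
    rw [char_val _ ψ, char_val _ ψ0, h0]
    congr 1
    have : (ψ 1).im = 0 := by
      have h2 := Complex.sq_norm (ψ 1)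
      rw [hnorm, Complex.normSq_apply, h1] at h2
      nlinarith
    apply Complex.ext <;> simp [h1, this]
  obtain ⟨ε, hε, hε2⟩ : ∃ ε : ℝ, ψ 1 ^ m = ε ∧ (ε = 1 ∨ ε = -1) := by
    have hz2 : (ψ 1 ^ m)^2 = 1 := by rw [← pow_mul, mul_comm m 2]; exact hz2
    rcases sq_eq_sq_iff_eq_or_eq_neg.mp (hz2.trans (one_pow 2).symm) with h | h
    · exact ⟨1, by simpa using h, Or.inl rfl⟩
    · exact ⟨-1, by simpa using h, Or.inr rfl⟩
  have hεsq : ε * ε = 1 := by rcases hε2 with h | h <;> rw [h] <;> norm_num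
  obtain ⟨hv, hc⟩ := cyc_val m hm ψ ε hε hεsq r hr hr1
  obtain ⟨hv0, -⟩ := cyc_val m hm ψ0 ((-1)^m) (by rw [h0]; push_cast; rfl) (by rw [← mul_pow]; simp) r hr hr1
  rw [h0] at hv0
  have hc' := abs_le.mp hc
  have hrm : r^m < 1 := pow_lt_one₀ hr.le hr1 hm.ne'
  have hrm0 : 0 < r^m := pow_pos hr m
  set c := (ψ 1).re
  have hrr : 0 < 1 - r^2 := by nlinarith
  have hd0 : 0 < 1 - 2 * r * (-1) + r^2 := by nlinarith
  have hd : 0 < 1 - 2 * r * c + r^2 := by nlinarith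
  refine ⟨_, _, hv, hv0, ?_⟩
  simp only [Complex.neg_re, Complex.one_re]
  by_cases hme : Even m
  · rw [hme.neg_one_pow]
    have hN0 : 0 < (1 - r^2) * (1 - 1 * r^m) := mul_pos hrr (by linarith)
    have hNN : (1 - r^2) * (1 - 1 * r^m) ≤ (1 - r^2) * (1 - ε * r^m) := by
      apply mul_le_mul_of_nonneg_left _ hrr.le
      rcases hε2 with h | h <;> rw [h] <;> linarith
    have hdd : 1 - 2 * r * c + r^2 ≤ 1 - 2 * r * (-1) + r^2 := by nlinarith
    refine ⟨div_pos hN0 hd0, div_le_div₀ (hN0.le.trans hNN) hNN hd hdd, fun hψ => ?_⟩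
    have hcl : -1 < c := lt_of_le_of_ne hc'.1 (hne1 hψ).symm
    have hdd' : 1 - 2 * r * c + r^2 < 1 - 2 * r * (-1) + r^2 := by nlinarith
    exact (div_lt_div_of_pos_left hN0 hd hdd').trans_le (div_le_div_of_nonneg_right hNN hd.le)
  · have hm1 : m = 1 := by
      rcases hn with h | ⟨k, h⟩
      · omega
      · exact absurd ⟨k, by omega⟩ hme
    subst hm1
    simp only [pow_one] at hε ⊢
    have hcε : c = ε := by simp [c, hε]
    have e0 : (1 - r^2) * (1 - -1 * r) / (1 - 2 * r * (-1) + r^2) = 1 - r := by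
      rw [div_eq_iff hd0.ne']; ring
    have e1 : (1 - r^2) * (1 - ε * r) / (1 - 2 * r * c + r^2) = 1 + ε * r := by
      rw [div_eq_iff hd.ne', hcε]; linear_combination (2 * r^2) * hεsq
    rw [e0, e1]
    refine ⟨by linarith, by rcases hε2 with h | h <;> rw [h] <;> linarith, fun hψ => ?_⟩
    have := hne1 hψ
    rcases hε2 with h | h
    · rw [h]; linarith
    · exact absurd (hcε.trans h) this

/-! Fourier analysis on a finite abelian group. -/
section Fourier
variable {G : Type*} [AddCommGroup G] [Fintype G] [DecidableEq G]

noncomputable def hat (s : G → ℝ) (ψ : AddChar G ℂ) : ℂ := ∑ g, (s g : ℂ) * ψ g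

lemma inversion (s : G → ℝ) (g : G) : (Fintype.card G : ℂ) * s g = ∑ ψ : AddChar G ℂ, hat s ψ * ψ (-g) := by
  simp only [hat, Finset.sum_mul]
  rw [Finset.sum_comm]
  have : ∀ x : G, ∑ ψ : AddChar G ℂ, (s x : ℂ) * ψ x * ψ (-g) = if x = g then (s x : ℂ) * Fintype.card G else 0 := by
    intro x
    have h1 := AddChar.sum_apply_eq_ite (x - g)
    simp only [mul_assoc, ← AddChar.map_add_eq_mul, ← sub_eq_add_neg]
    rw [← Finset.mul_sum, h1]
    simp [sub_eq_zero]
  simp only [this]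
  simp [mul_comm]

lemma fourier_aux (F s : G → ℝ) : (Fintype.card G : ℂ) * ∑ h, ∑ g, (s h : ℂ) * s g * F (g - h) =
    ∑ ψ : AddChar G ℂ, hat F ψ * (hat s ψ * (starRingEnd ℂ) (hat s ψ)) := by
  have h1 : ∀ h g : G, (Fintype.card G : ℂ) * ((s h : ℂ) * s g * F (g - h)) =
      ∑ ψ : AddChar G ℂ, hat F ψ * ((s h * ψ h) * (s g * ψ (-g))) := by
    intro h g
    have := inversion F (g - h)
    rw [mul_left_comm, this, Finset.mul_sum]
    refine Finset.sum_congr rfl fun ψ _ => ?_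
    rw [show -(g - h) = h + -g by abel, AddChar.map_add_eq_mul]
    ring
  simp only [Finset.mul_sum, h1]
  have h2 : ∀ ψ : AddChar G ℂ, hat F ψ * (hat s ψ * (starRingEnd ℂ) (hat s ψ)) =
      ∑ h, ∑ g, hat F ψ * ((s h * ψ h) * (s g * ψ (-g))) := by
    intro ψ
    have : (starRingEnd ℂ) (hat s ψ) = ∑ g, (s g * ψ (-g)) := by
      simp [hat, AddChar.map_neg_eq_conj]
    rw [this]
    conv_lhs => rw [hat.eq_def s, Finset.sum_mul_sum, Finset.mul_sum]
    simp only [Finset.mul_sum]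
  simp only [h2]
  rw [Finset.sum_comm (s := (Finset.univ : Finset (AddChar G ℂ)))]
  refine Finset.sum_congr rfl fun h _ => ?_
  rw [Finset.sum_comm (s := (Finset.univ : Finset (AddChar G ℂ)))]

lemma fourier (F s : G → ℝ) : (Fintype.card G : ℝ) * ∑ h, ∑ g, s h * s g * F (g - h) =
    ∑ ψ : AddChar G ℂ, (hat F ψ).re * Complex.normSq (hat s ψ) := by
  have := congrArg Complex.re (fourier_aux F s)
  simp only [Complex.mul_conj, Complex.re_sum, Complex.re_mul_ofReal] at this
  rw [← this]
  have e : (Fintype.card G : ℂ) * ∑ h, ∑ g, (s h : ℂ) * s g * F (g - h) =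
    (((Fintype.card G : ℝ) * ∑ h, ∑ g, s h * s g * F (g - h) : ℝ) : ℂ) := by push_cast; rfl
  rw [e, Complex.ofReal_re]

lemma parseval (s : G → ℝ) : (Fintype.card G : ℝ) * ∑ h, s h * s h =
    ∑ ψ : AddChar G ℂ, Complex.normSq (hat s ψ) := by
  have := fourier (fun x => if x = 0 then 1 else 0) s
  have h1 : ∀ ψ : AddChar G ℂ, hat (fun x : G => if x = 0 then (1:ℝ) else 0) ψ = 1 := by
    intro ψ
    rw [hat, Finset.sum_eq_single 0]
    · simp
    · intro x _ hx; simp [hx]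
    · simp
  simpa [h1, sub_eq_zero] using this

lemma quad_min (F : G → ℝ) (χ : AddChar G ℂ) (hχ : ∀ ψ, ψ ≠ χ → (hat F χ).re < (hat F ψ).re) (s : G → ℝ) :
    (hat F χ).re * ∑ h, s h * s h ≤ ∑ h, ∑ g, s h * s g * F (g - h) ∧
    (∑ h, ∑ g, s h * s g * F (g - h) = (hat F χ).re * ∑ h, s h * s h → ∃ c : ℂ, ∀ g, (s g : ℂ) = c * χ (-g)) := by
  have hcard : (0:ℝ) < Fintype.card G := by exact_mod_cast Fintype.card_pos
  have key : (Fintype.card G : ℝ) * (∑ h, ∑ g, s h * s g * F (g - h) - (hat F χ).re * ∑ h, s h * s h) =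
      ∑ ψ : AddChar G ℂ, ((hat F ψ).re - (hat F χ).re) * Complex.normSq (hat s ψ) := by
    simp only [sub_mul, Finset.sum_sub_distrib]
    rw [mul_sub, fourier, ← Finset.mul_sum, ← parseval]
    ring
  have hnn : ∀ ψ ∈ (Finset.univ : Finset (AddChar G ℂ)), 0 ≤ ((hat F ψ).re - (hat F χ).re) * Complex.normSq (hat s ψ) := by
    intro ψ _
    apply mul_nonneg _ (Complex.normSq_nonneg _)
    by_cases h : ψ = χ
    · rw [h]; simp
    · linarith [hχ ψ h]
  constructor
  · have := Finset.sum_nonneg hnn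
    rw [← key] at this
    have := pos_of_mul_pos_right (a := (Fintype.card G : ℝ)) (b := ∑ h, ∑ g, s h * s g * F (g - h) - (hat F χ).re * ∑ h, s h * s h + 1) (by nlinarith) hcard.le
    by_contra hlt
    push Not at hlt
    nlinarith
  · intro heq
    rw [heq, sub_self, mul_zero] at key
    have hz := (Finset.sum_eq_zero_iff_of_nonneg hnn).mp key.symm
    refine ⟨hat s χ / Fintype.card G, fun g => ?_⟩
    have hinv := inversion s g
    rw [Finset.sum_eq_single χ] at hinv
    · have hc : (Fintype.card G : ℂ) ≠ 0 := by exact_mod_cast hcard.ne'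
      field_simp
      linear_combination hinv
    · intro ψ _ hψ
      have := hz ψ (Finset.mem_univ _)
      have h2 := (mul_eq_zero.mp this).resolve_left (by linarith [hχ ψ hψ])
      rw [Complex.normSq_eq_zero.mp h2, zero_mul]
    · simp

end Fourier
end Checker
namespace Checker
open Polynomial Filter Topology

section Abstract
variable {G : Type*} [AddCommGroup G] [Fintype G] [DecidableEq G]

def sg (S : Finset G) (g : G) : ℝ := if g ∈ S then 1 else -1

lemma sum_shift (F : G → ℝ) (h : G) : ∑ g, F (g - h) = ∑ x, F x :=
  Fintype.sum_equiv (Equiv.subRight h) _ _ (fun _ => rfl)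

lemma sum_shift' (F : G → ℝ) (g : G) : ∑ h, F (g - h) = ∑ x, F x :=
  Fintype.sum_equiv (Equiv.subLeft g) _ _ (fun _ => rfl)

lemma sum_sg (S : Finset G) (hS : 2 * S.card = Fintype.card G) : ∑ g, sg S g = 0 := by
  have : ∀ g, sg S g = 2 * (if g ∈ S then 1 else 0) - 1 := by
    intro g; unfold sg; split_ifs <;> norm_num
  simp only [this, Finset.sum_sub_distrib, ← Finset.mul_sum]
  simp
  have h : (2:ℝ) * S.card = Fintype.card G := by exact_mod_cast hS
  linarith

lemma energy_eq (F : G → ℝ) (S : Finset G) (hS : 2 * S.card = Fintype.card G) :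
    4 * ∑ h ∈ S, ∑ g ∈ S, F (g - h) = Fintype.card G * ∑ x, F x + ∑ h, ∑ g, sg S h * sg S g * F (g - h) := by
  have h1 : ∑ h ∈ S, ∑ g ∈ S, F (g - h) =
      ∑ h, ∑ g, (if h ∈ S then 1 else 0) * (if g ∈ S then 1 else 0) * F (g - h) := by
    simp [ite_and, Finset.sum_ite_mem, mul_assoc, ← Finset.mul_sum]
  have h2 : ∀ h g : G, 4 * ((if h ∈ S then 1 else 0) * (if g ∈ S then 1 else 0) * F (g - h)) =
      F (g - h) + sg S h * F (g - h) + sg S g * F (g - h) + sg S h * sg S g * F (g - h) := by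
    intro h g; unfold sg; split_ifs <;> ring
  rw [h1]
  simp only [Finset.mul_sum, h2, Finset.sum_add_distrib]
  have a1 : ∑ h : G, ∑ g, F (g - h) = Fintype.card G * ∑ x, F x := by
    simp [sum_shift]
  have a2 : ∑ h : G, ∑ g, sg S h * F (g - h) = 0 := by
    simp only [← Finset.mul_sum, sum_shift, ← Finset.sum_mul, sum_sg S hS, zero_mul]
  have a3 : ∑ h : G, ∑ g, sg S g * F (g - h) = 0 := by
    rw [Finset.sum_comm]
    simp only [← Finset.mul_sum, sum_shift', ← Finset.sum_mul, sum_sg S hS, zero_mul]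
  rw [a1, a2, a3, Finset.mul_sum]; ring

variable (F : G → ℝ) (χ : AddChar G ℂ) (σ : G → ℝ)

lemma point_energy (hσ : ∀ g, χ g = σ g) (h1 : ∀ g, σ g = 1 ∨ σ g = -1)
    (S : Finset G) (e : ℝ) (he : e = 1 ∨ e = -1) (hS : ∀ g, g ∈ S ↔ σ g = e) (h : G) (hh : h ∈ S) :
    ∑ g ∈ S, F (g - h) = ∑ x, if σ x = 1 then F x else 0 := by
  have hadd : ∀ a b, σ (a + b) = σ a * σ b := by
    intro a b
    have := AddChar.map_add_eq_mul χ a b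
    rw [hσ, hσ, hσ] at this
    exact_mod_cast this
  rw [← Finset.sum_ite_mem_eq S]
  rw [← sum_shift (fun x => if σ x = 1 then F x else 0) h]
  refine Finset.sum_congr rfl fun g _ => ?_
  have h2 : g ∈ S ↔ σ (g - h) = 1 := by
    have h3 := hadd (g - h) h
    rw [sub_add_cancel, (hS h).mp hh] at h3
    rw [hS, h3]
    rcases he with rfl | rfl <;> rcases h1 (g - h) with h4 | h4 <;> rw [h4] <;> norm_num
  simp [h2]

lemma abstract_main (hχ : ∀ ψ, ψ ≠ χ → (hat F χ).re < (hat F ψ).re) (hσ : ∀ g, χ g = σ g)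
    (h1 : ∀ g, σ g = 1 ∨ σ g = -1) (Se So : Finset G) (hSe : ∀ g, g ∈ Se ↔ σ g = 1)
    (hSo : ∀ g, g ∈ So ↔ σ g = -1) (hSecard : 2 * Se.card = Fintype.card G)
    (S : Finset G) (hS : 2 * S.card = Fintype.card G) :
    ∑ h ∈ Se, ∑ g ∈ Se, F (g - h) ≤ ∑ h ∈ S, ∑ g ∈ S, F (g - h) ∧
    (∑ h ∈ S, ∑ g ∈ S, F (g - h) = ∑ h ∈ Se, ∑ g ∈ Se, F (g - h) → S = Se ∨ S = So) := by
  have hadd : ∀ a b, σ (a + b) = σ a * σ b := by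
    intro a b
    have := AddChar.map_add_eq_mul χ a b
    rw [hσ, hσ, hσ] at this
    exact_mod_cast this
  have hsq : ∀ a, σ a * σ a = 1 := fun a => by rcases h1 a with h | h <;> rw [h] <;> norm_num
  have hsgsq : ∀ (a : G), sg S a * sg S a = 1 := fun a => by unfold sg; split_ifs <;> norm_num
  have hsgSe : ∀ g, sg Se g = σ g := by
    intro g
    unfold sg
    rcases h1 g with h | h
    · rw [if_pos ((hSe g).mpr h), h]
    · rw [if_neg (by rw [hSe, h]; norm_num), h]
  have hlam : (hat F χ).re = ∑ x, F x * σ x := by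
    rw [hat, Complex.re_sum]
    refine Finset.sum_congr rfl fun x _ => ?_
    rw [hσ, ← Complex.ofReal_mul, Complex.ofReal_re]
  have hQe : ∑ h, ∑ g, sg Se h * sg Se g * F (g - h) = (hat F χ).re * Fintype.card G := by
    have : ∀ h g, sg Se h * sg Se g * F (g - h) = (fun x => F x * σ x) (g - h) := by
      intro h g
      have h3 := hadd (g - h) h
      rw [sub_add_cancel] at h3
      simp only [hsgSe, h3]
      linear_combination (σ (g-h) * F (g-h)) * hsq h
    simp only [this, sum_shift (fun x => F x * σ x), hlam]
    simp [mul_comm]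
  obtain ⟨q1, q2⟩ := quad_min F χ hχ (sg S)
  have hss : ∑ h, sg S h * sg S h = Fintype.card G := by simp [hsgsq]
  rw [hss] at q1 q2
  have e1 := energy_eq F S hS
  have e2 := energy_eq F Se hSecard
  rw [hQe] at e2
  refine ⟨by linarith, fun heq => ?_⟩
  obtain ⟨c, hc⟩ := q2 (by linarith)
  have hneg : ∀ g, χ (-g) = σ g := by
    intro g
    have h3 := hadd (-g) g
    have h0 : σ 0 = 1 := by
      have := AddChar.map_zero_eq_one χ
      rw [hσ] at this
      exact_mod_cast this
    rw [neg_add_cancel, h0] at h3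
    rw [hσ]
    congr 1
    rcases h1 g with h | h <;> rw [h] at h3 ⊢ <;> linarith
  have hc0 := hc 0
  rw [neg_zero, AddChar.map_zero_eq_one, mul_one] at hc0
  have hcg : ∀ g, sg S g = sg S 0 * σ g := by
    intro g
    have := hc g
    rw [← hc0, hneg] at this
    exact_mod_cast this
  have hmem : ∀ g, g ∈ S ↔ sg S g = 1 := by
    intro g; unfold sg; split_ifs with h
    · simp [h]
    · simp [h]; norm_num
  by_cases h0 : (0 : G) ∈ S
  · left
    ext g
    rw [hmem, hcg, hSe]; simp [sg, h0]
  · right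
    ext g
    rw [hmem, hcg, hSo]; simp [sg, h0, neg_eq_iff_eq_neg]

end Abstract

section Torus
variable {d : ℕ} (n : Fin d → ℕ) [∀ i, NeZero (n i)]

def dl (x : ∀ i, ZMod (n i)) : ℕ := ∑ i, min ((x i).val) (n i - (x i).val)

lemma dl_pos (x : ∀ i, ZMod (n i)) (hx : x ≠ 0) : 1 ≤ dl n x := by
  obtain ⟨i, hi⟩ := Function.ne_iff.mp hx
  have h1 : 0 < (x i).val := Nat.pos_of_ne_zero (by rwa [Ne, ZMod.val_eq_zero])
  have h2 := ZMod.val_lt (x i)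
  have h3 : min ((x i).val) (n i - (x i).val) ≤ dl n x :=
    Finset.single_le_sum (f := fun i => min ((x i).val) (n i - (x i).val)) (fun _ _ => Nat.zero_le _) (Finset.mem_univ i)
  omega

lemma par_add (m : ℕ) [NeZero m] (hm : Even m) (a b : ZMod m) :
    (-1 : ℝ) ^ (a + b).val = (-1) ^ a.val * (-1) ^ b.val := by
  rw [ZMod.val_add, ← pow_add]
  obtain ⟨k, hk⟩ := hm
  conv_rhs => rw [← Nat.mod_add_div (a.val + b.val) m]
  rw [pow_add, pow_mul, show (-1:ℝ)^m = 1 from Even.neg_one_pow ⟨k, hk⟩]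
  simp

def sig (x : ∀ i, ZMod (n i)) : ℝ := (-1) ^ (∑ i, (x i).val)

lemma sig_add (hn : ∀ i, Even (n i)) (x y : ∀ i, ZMod (n i)) : sig n (x + y) = sig n x * sig n y := by
  simp only [sig, ← Finset.prod_pow_eq_pow_sum, ← Finset.prod_mul_distrib]
  exact Finset.prod_congr rfl fun i _ => par_add (n i) (hn i) _ _

noncomputable def chi (hn : ∀ i, Even (n i)) : AddChar (∀ i, ZMod (n i)) ℂ where
  toFun x := (sig n x : ℂ)
  map_zero_eq_one' := by simp [sig]
  map_add_eq_mul' x y := by rw [sig_add n hn]; push_cast; rfl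

def comp (ψ : AddChar (∀ i, ZMod (n i)) ℂ) (i : Fin d) : AddChar (ZMod (n i)) ℂ :=
  ψ.compAddMonoidHom (AddMonoidHom.single (fun i => ZMod (n i)) i)

lemma comp_apply (ψ : AddChar (∀ i, ZMod (n i)) ℂ) (i : Fin d) (a : ZMod (n i)) :
    comp n ψ i a = ψ (Pi.single i a) := rfl

lemma eq_prod_comp (ψ : AddChar (∀ i, ZMod (n i)) ℂ) (x : ∀ i, ZMod (n i)) :
    ψ x = ∏ i, comp n ψ i (x i) := by
  conv_lhs => rw [← Finset.univ_sum_single x]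
  have h : ∀ T : Finset (Fin d), ψ (∑ i ∈ T, Pi.single i (x i)) = ∏ i ∈ T, comp n ψ i (x i) := by
    intro T
    induction T using Finset.induction_on with
    | empty => simp
    | insert a T ha ih =>
      rw [Finset.sum_insert ha, Finset.prod_insert ha, AddChar.map_add_eq_mul, ih, comp_apply]
  exact h Finset.univ

lemma hat_pow (ψ : AddChar (∀ i, ZMod (n i)) ℂ) (r : ℝ) : hat (fun x => r ^ dl n x) ψ =
    ∏ i, ∑ a : ZMod (n i), ((r ^ (min a.val (n i - a.val)) : ℝ) : ℂ) * comp n ψ i a := by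
  rw [Finset.prod_univ_sum, Fintype.piFinset_univ, hat]
  refine Finset.sum_congr rfl fun x _ => ?_
  rw [eq_prod_comp, dl, ← Finset.prod_pow_eq_pow_sum, Finset.prod_mul_distrib]
  push_cast; rfl

lemma chi_comp_one (hn : ∀ i, Even (n i)) (i : Fin d) : comp n (chi n hn) i 1 = -1 := by
  have h2 : (1 : ZMod (n i)).val = 1 := by
    have : n i ≠ 0 := NeZero.ne _
    have : 1 < n i := by obtain ⟨k, hk⟩ := hn i; omega
    rw [ZMod.val_one_eq_one_mod, Nat.mod_eq_of_lt this]
  have : ∑ j, ((Pi.single i (1 : ZMod (n i)) : ∀ i, ZMod (n i)) j).val = 1 := by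
    rw [Finset.sum_eq_single i]
    · simpa using h2
    · intro j _ hj; simp [Pi.single_eq_of_ne hj]
    · simp
  change ((sig n (Pi.single i 1) : ℝ) : ℂ) = -1
  rw [sig, this]; simp

lemma hat_pow_lt (hn : ∀ i, Even (n i)) (hn' : ∀ i, n i = 2 ∨ 4 ∣ n i)
    (ψ : AddChar (∀ i, ZMod (n i)) ℂ) (hψ : ψ ≠ chi n hn) (r : ℝ) (hr : 0 < r) (hr1 : r < 1) :
    (hat (fun x => r ^ dl n x) (chi n hn)).re < (hat (fun x => r ^ dl n x) ψ).re := by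
  choose v v0 h1 h2 h3 h4 h5 using fun i => cyc_cmp (n i) (hn' i) (comp n ψ i) (comp n (chi n hn) i)
    (chi_comp_one n hn i) r hr hr1
  rw [hat_pow, hat_pow]
  simp only [h1, h2, ← Complex.ofReal_prod, Complex.ofReal_re]
  apply Finset.prod_lt_prod (fun i _ => h3 i) (fun i _ => h4 i)
  by_contra hcon
  push Not at hcon
  apply hψ
  ext x
  rw [eq_prod_comp, eq_prod_comp n (chi n hn)]
  refine Finset.prod_congr rfl fun i _ => ?_
  by_contra h
  have := h5 i (fun h' => h (by rw [h']))
  exact absurd (hcon i (Finset.mem_univ i)) (not_le.mpr this)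

noncomputable def FF (f : ℝ → ℝ) (x : ∀ i, ZMod (n i)) : ℝ := if x = 0 then 0 else f (dl n x)

lemma hat_FF_lt (hn : ∀ i, Even (n i)) (hn' : ∀ i, n i = 2 ∨ 4 ∣ n i) (f : ℝ → ℝ) (hf : CMs f)
    (ψ : AddChar (∀ i, ZMod (n i)) ℂ) (hψ : ψ ≠ chi n hn) :
    (hat (FF n f) (chi n hn)).re < (hat (FF n f) ψ).re := by
  have hre : ∀ (F : (∀ i, ZMod (n i)) → ℝ) (ψ : AddChar (∀ i, ZMod (n i)) ℂ), (hat F ψ).re = ∑ x, F x * (ψ x).re := by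
    intro F ψ
    rw [hat, Complex.re_sum]
    exact Finset.sum_congr rfl fun x _ => Complex.re_ofReal_mul _ _
  set u : (∀ i, ZMod (n i)) → ℝ := fun x => (ψ x).re - (chi n hn x).re with hu
  have hu0 : u 0 = 0 := by simp [hu]
  set P : ℝ[X] := ∑ x ∈ Finset.univ.erase (0 : ∀ i, ZMod (n i)), C (u x) * X ^ (dl n x - 1) with hP
  have hL : L f P = (hat (FF n f) ψ).re - (hat (FF n f) (chi n hn)).re := by
    rw [hre, hre, ← Finset.sum_sub_distrib, hP, map_sum]
    rw [← Finset.add_sum_erase _ _ (Finset.mem_univ (0 : ∀ i, ZMod (n i)))]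
    simp only [FF, if_true, zero_mul, sub_zero, zero_add]
    refine Finset.sum_congr rfl fun x hx => ?_
    have hx0 : x ≠ 0 := Finset.ne_of_mem_erase hx
    have := dl_pos n x hx0
    rw [L_CXpow, if_neg hx0, Nat.cast_sub this]
    simp only [hu, Nat.cast_one, sub_add_cancel]; ring
  have hpos := L_pos hf P (by
    intro r hr hr1
    have h1 : r * P.eval r = (hat (fun x => r ^ dl n x) ψ).re - (hat (fun x => r ^ dl n x) (chi n hn)).re := by
      rw [hre, hre, ← Finset.sum_sub_distrib, hP, eval_finsetSum, Finset.mul_sum]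
      rw [← Finset.add_sum_erase _ _ (Finset.mem_univ (0 : ∀ i, ZMod (n i)))]
      have : r ^ dl n (0 : ∀ i, ZMod (n i)) * (ψ 0).re - r ^ dl n (0 : ∀ i, ZMod (n i)) * (chi n hn 0).re = 0 := by
        rw [← mul_sub]; change _ * u 0 = 0; rw [hu0, mul_zero]
      rw [this, zero_add]
      refine Finset.sum_congr rfl fun x hx => ?_
      have hx0 : x ≠ 0 := Finset.ne_of_mem_erase hx
      have h2 := dl_pos n x hx0
      obtain ⟨k, hk⟩ : ∃ k, dl n x = k + 1 := ⟨dl n x - 1, by omega⟩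
      rw [hk]
      simp only [eval_mul, eval_C, eval_pow, eval_X, hu, Nat.add_sub_cancel]
      ring
    have h2 := hat_pow_lt n hn hn' ψ hψ r hr hr1
    exact pos_of_mul_pos_right (a := r) (by linarith) hr.le)
  linarith

end Torus
end Checker

theorem toric_checkerboard_minimises (d : ℕ) (hd : 0 < d) (n : Fin d → ℕ)
    [∀ i, NeZero (n i)] (hn : ∀ i, n i = 2 ∨ 4 ∣ n i)
    (f : ℝ → ℝ) (hf : CompletelyMonotonic f) :
    let G := ∀ i, ZMod (n i)
    let δ : G → G → ℕ := fun g h => ∑ i, min ((g i - h i).val) (n i - (g i - h i).val)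
    let Se : Finset G := Finset.univ.filter (fun g => (∑ i, (g i).val) % 2 = 0)
    let So : Finset G := Finset.univ.filter (fun g => (∑ i, (g i).val) % 2 = 1)
    let Etot : Finset G → ℝ := fun S => ∑ h ∈ S, ∑ g ∈ S.erase h, f (δ g h)
    (∀ S : Finset G, S.card = Fintype.card G / 2 →
      Etot Se ≤ Etot S ∧ (Etot S = Etot Se ↔ S = Se ∨ S = So)) ∧
    (∀ S : Finset G, S.card = Fintype.card G / 2 →
      ∀ (hS : S.Nonempty) (hSe : Se.Nonempty),
        Se.sup' hSe (fun h => ∑ g ∈ Se.erase h, f (δ g h)) ≤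
          S.sup' hS (fun h => ∑ g ∈ S.erase h, f (δ g h)) ∧
        (S.sup' hS (fun h => ∑ g ∈ S.erase h, f (δ g h)) =
            Se.sup' hSe (fun h => ∑ g ∈ Se.erase h, f (δ g h)) ↔ S = Se ∨ S = So)) := by
  intro G δ Se So Etot
  have hev : ∀ i, Even (n i) := by
    intro i
    rcases hn i with h | ⟨k, h⟩
    · rw [h]; exact even_two
    · exact ⟨2*k, by omega⟩
  set F : G → ℝ := Checker.FF n f with hF
  have hpt : ∀ (S : Finset G) (h : G), h ∈ S → ∑ g ∈ S.erase h, f (δ g h) = ∑ g ∈ S, F (g - h) := by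
    intro S h hh
    rw [← Finset.add_sum_erase S _ hh]
    have h0 : F (h - h) = 0 := by rw [sub_self]; simp [hF, Checker.FF]
    rw [h0, zero_add]
    refine Finset.sum_congr rfl fun g hg => ?_
    rw [hF, Checker.FF, if_neg (sub_ne_zero.mpr (Finset.ne_of_mem_erase hg))]
    rfl
  have hE : ∀ S, Etot S = ∑ h ∈ S, ∑ g ∈ S, F (g - h) := fun S =>
    Finset.sum_congr rfl fun h hh => hpt S h hh
  have hsigma : ∀ g : G, Checker.chi n hev g = Checker.sig n g := fun g => rfl
  have hpm : ∀ g : G, Checker.sig n g = 1 ∨ Checker.sig n g = -1 := fun g => neg_one_pow_eq_or ℝ _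
  have hSe : ∀ g, g ∈ Se ↔ Checker.sig n g = 1 := by
    intro g
    simp only [Se, Finset.mem_filter, Finset.mem_univ, true_and, Checker.sig]
    rw [← Nat.even_iff, neg_one_pow_eq_one_iff_even (by norm_num)]
  have hSo : ∀ g, g ∈ So ↔ Checker.sig n g = -1 := by
    intro g
    simp only [So, Finset.mem_filter, Finset.mem_univ, true_and, Checker.sig]
    rw [← Nat.odd_iff, neg_one_pow_eq_neg_one_iff_odd (by norm_num)]
  have hchi0 : Checker.chi n hev ≠ 1 := by
    intro h
    have h1 := Checker.chi_comp_one n hev ⟨0, hd⟩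
    rw [Checker.comp_apply, h] at h1
    norm_num at h1
  have hsum : ∑ g : G, Checker.sig n g = 0 := by
    have := AddChar.sum_eq_zero_of_ne_one hchi0
    simp only [hsigma] at this
    exact_mod_cast this
  have hsecard : 2 * Se.card = Fintype.card G := by
    have h1 : ∀ g : G, Checker.sig n g = 2 * (if g ∈ Se then 1 else 0) - 1 := by
      intro g
      rcases hpm g with h | h
      · rw [if_pos ((hSe g).mpr h), h]; norm_num
      · rw [if_neg (by rw [hSe, h]; norm_num), h]; norm_num
    simp only [h1, Finset.sum_sub_distrib, ← Finset.mul_sum] at hsum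
    simp only [Finset.sum_ite_mem, Finset.univ_inter, Finset.sum_const, Finset.card_univ,
      nsmul_eq_mul, mul_one] at hsum
    have : (2:ℝ) * Se.card = Fintype.card G := by linarith
    exact_mod_cast this
  have hsocard : 2 * So.card = Fintype.card G := by
    have h1 : ∀ g : G, Checker.sig n g = 1 - 2 * (if g ∈ So then 1 else 0) := by
      intro g
      rcases hpm g with h | h
      · rw [if_neg (by rw [hSo, h]; norm_num), h]; norm_num
      · rw [if_pos ((hSo g).mpr h), h]; norm_num
    simp only [h1, Finset.sum_sub_distrib, ← Finset.mul_sum] at hsum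
    simp only [Finset.sum_ite_mem, Finset.univ_inter, Finset.sum_const, Finset.card_univ,
      nsmul_eq_mul, mul_one] at hsum
    have : (2:ℝ) * So.card = Fintype.card G := by linarith
    exact_mod_cast this
  set c : ℝ := ∑ x : G, if Checker.sig n x = 1 then F x else 0
  have hpe : ∀ h ∈ Se, ∑ g ∈ Se, F (g - h) = c := fun h hh =>
    Checker.point_energy F (Checker.chi n hev) (Checker.sig n) hsigma hpm Se 1 (Or.inl rfl) hSe h hh
  have hpo : ∀ h ∈ So, ∑ g ∈ So, F (g - h) = c := fun h hh =>
    Checker.point_energy F (Checker.chi n hev) (Checker.sig n) hsigma hpm So (-1) (Or.inr rfl) hSo h hh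
  have hEe : Etot Se = Se.card * c := by
    rw [hE, Finset.sum_congr rfl hpe]; simp
  have hEo : Etot So = Se.card * c := by
    rw [hE, Finset.sum_congr rfl hpo]
    have : So.card = Se.card := by omega
    simp [this]
  have main : ∀ S : Finset G, S.card = Fintype.card G / 2 →
      Etot Se ≤ Etot S ∧ (Etot S = Etot Se ↔ S = Se ∨ S = So) := by
    intro S hS
    have hS2 : 2 * S.card = Fintype.card G := by omega
    obtain ⟨m1, m2⟩ := Checker.abstract_main F (Checker.chi n hev) (Checker.sig n)
      (fun ψ hψ => Checker.hat_FF_lt n hev hn f (Checker.CMs.of hf) ψ hψ) hsigma hpm Se So hSe hSo hsecard S hS2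
    rw [← hE, ← hE] at m1 m2
    refine ⟨m1, m2, ?_⟩
    rintro (rfl | rfl)
    · rfl
    · rw [hEo, hEe]
  refine ⟨main, ?_⟩
  intro S hS hSne hSene
  obtain ⟨m1, m2⟩ := main S hS
  have hcards : S.card = Se.card := by omega
  have hcpos : (0:ℝ) < Se.card := by exact_mod_cast Finset.card_pos.mpr hSene
  have hsupc : ∀ (T : Finset G) (hT : T.Nonempty), (∀ h ∈ T, ∑ g ∈ T, F (g - h) = c) →
      T.sup' hT (fun h => ∑ g ∈ T.erase h, f (δ g h)) = c := by
    intro T hT hc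
    rw [Finset.sup'_congr hT rfl (g := fun _ => c) (fun h hh => by rw [hpt T h hh, hc h hh])]
    exact Finset.sup'_const hT c
  rw [hsupc Se hSene hpe]
  set M := S.sup' hSne (fun h => ∑ g ∈ S.erase h, f (δ g h)) with hM
  have hbound : Etot S ≤ Se.card * M := by
    rw [← hcards, ← nsmul_eq_mul]
    exact Finset.sum_le_card_nsmul S _ M fun h hh =>
      Finset.le_sup' (fun h => ∑ g ∈ S.erase h, f (δ g h)) hh
  refine ⟨?_, fun h => ?_, ?_⟩
  · rw [hEe] at m1
    exact le_of_mul_le_mul_left (m1.trans hbound) hcpos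
  · apply m2.mp
    apply le_antisymm _ m1
    rw [hEe, ← h]; exact hbound
  · rintro (h | h)
    · subst h; exact hsupc _ hSne hpe
    · subst h; exact hsupc _ hSne hpo
end
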